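/- arXiv:math/9204236 — 2 statements merged into one kernel-verified Lean document; each statement's English description precedes it below -/
import Mathlib

section
/- (A_ℓ Bailey Pair Inversion.) Let ℓ ≥ 1, let q, a, x_1, …, x_ℓ be nonzero complex numbers such that every q-shifted factorial occurring in a denominator below is nonzero. Let M and M* be the A_ℓ Bailey transform matrices: M(i;j) := ∏_{r,s=1}^{ℓ} ((q x_r/x_s) q^{j_r−j_s}; q)_{i_r−j_r}^{−1} · ∏_{k=1}^{ℓ} (a q x_k/x_ℓ; q)_{i_k+(j_1+⋯+j_ℓ)}^{−1}, and M*(i;j) := ∏_{k=1}^{ℓ} [1 − a (x_k/x_ℓ) q^{i_k+(i_1+⋯+i_ℓ)}] · ∏_{k=1}^{ℓ} (a q x_k/x_ℓ; q)_{j_k+(i_1+⋯+i_ℓ)−1} · ∏_{r,s=1}^{ℓ} ((q x_r/x_s) q^{j_r−j_s}; q)_{i_r−j_r}^{−1} · (−1)^{|i|−|j|} q^{binom(|i|−|j|,2)}. Let A = {A_y} and B = {B_y} be sequences of complex numbers indexed by vectors y of nonnegative integers of length ℓ. Then B_N = ∑_{0 ≤ y_k ≤ N_k, k=1,…,ℓ}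 M(N;y) A_y holds for every vector N of nonnegative integers if and only if A_N = ∑_{0 ≤ y_k ≤ N_k, k=1,…,ℓ} M*(N;y) B_y holds for every vector N of nonnegative integers. -/
/-!
By triangularity it suffices that `∑ y, M*(i;y) M(y;j)` vanishes for `j < i`. Up to a factor
independent of `y`, the signs, powers of `q` and denominators common to `M*(i;y)` and `M(y;j)`
multiply to the Vandermonde determinant of the nodes `x_r q ^ (y r)` times the product of their
Lagrange weights in the set of all nodes `x_r q ^ t` with `j r ≤ t ≤ i r`. What remains is the
product of the values of one polynomial `φ` at these nodes. By multilinearity in the rows, the sum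
over `y` is a single determinant. The sum of its rows has as entries the top divided differences,
over all nodes of the box, of polynomials `φ z ^ p` of too small degree, so it is zero.
-/

set_option autoImplicit false
set_option maxHeartbeats 1000000

open Finset

/-- The `q`-shifted factorial `(a; q)_n`, extended to all integers `n` by the
standard convention `(a;q)_{-m} = 1 / ∏_{k=1}^{m} (1 - a q^{-k})`. -/
noncomputable def qp (a q : ℂ) (n : ℤ) : ℂ :=
  if 0 ≤ n then ∏ k ∈ Finset.range n.toNat, (1 - a * q ^ (k : ℤ))
  else (∏ k ∈ Finset.range (-n).toNat, (1 - a * q ^ (-(k : ℤ) - 1)))⁻¹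

/-- The `A_ℓ` Bailey transform matrix `M(i;j)`; `xl` denotes `x_ℓ`. -/
noncomputable def MA (ℓ : ℕ) (q a : ℂ) (x : Fin ℓ → ℂ) (xl : ℂ)
    (i j : Fin ℓ → ℕ) : ℂ :=
  (∏ r, ∏ s,
    (qp (q * (x r / x s) * q ^ ((j r : ℤ) - (j s : ℤ))) q ((i r : ℤ) - (j r : ℤ)))⁻¹) *
  ∏ k, (qp (a * q * (x k / xl)) q ((i k : ℤ) + ∑ s, (j s : ℤ)))⁻¹

/-- The `A_ℓ` Bailey transform matrix `M*(i;j)`; `xl` denotes `x_ℓ`. -/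
noncomputable def MAstar (ℓ : ℕ) (q a : ℂ) (x : Fin ℓ → ℂ) (xl : ℂ)
    (i j : Fin ℓ → ℕ) : ℂ :=
  (∏ k, (1 - a * (x k / xl) * q ^ ((i k : ℤ) + ∑ s, (i s : ℤ)))) *
  (∏ k, qp (a * q * (x k / xl)) q ((j k : ℤ) + (∑ s, (i s : ℤ)) - 1)) *
  (∏ r, ∏ s,
    (qp (q * (x r / x s) * q ^ ((j r : ℤ) - (j s : ℤ))) q ((i r : ℤ) - (j r : ℤ)))⁻¹) *
  (-1 : ℂ) ^ ((∑ s, (i s : ℤ)) - ∑ s, (j s : ℤ)) *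
  q ^ (((∑ s, (i s : ℤ)) - ∑ s, (j s : ℤ)) *
        ((∑ s, (i s : ℤ)) - (∑ s, (j s : ℤ)) - 1) / 2)

namespace AlBailey

section TriangularInversion

variable {α R : Type*} [PartialOrder α] [OrderBot α] [LocallyFiniteOrder α] [CommRing R]

theorem eq_of_sum_Icc_bot_mul_eq {S : α → α → R}
    (hS : ∀ i, IsUnit (S i i)) {B B' : α → R}
    (h : ∀ N, ∑ y ∈ Icc ⊥ N, S N y * B y = ∑ y ∈ Icc ⊥ N, S N y * B' y) : B = B' := by
  have hcard : StrictMono fun N : α => #(Icc ⊥ N) := fun _ _ hlt =>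
    card_lt_card (Icc_ssubset_Icc_right bot_le le_rfl hlt)
  have := hcard.wellFoundedLT
  funext N
  induction N using WellFoundedLT.induction with
  | ind N ih =>
    have hlower : ∑ y ∈ Ico ⊥ N, S N y * B y = ∑ y ∈ Ico ⊥ N, S N y * B' y :=
      sum_congr rfl fun y hy => by rw [ih y (mem_Ico.1 hy).2]
    have hN := h N
    simp only [Icc_eq_cons_Ico bot_le, sum_cons, hlower] at hN
    exact (hS N).mul_left_cancel (add_right_cancel hN)

theorem sum_Icc_bot_mul_sum_Icc_bot_mul [DecidableEq α] {M S : α → α → R}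
    (hSM : ∀ i j, j ≤ i → ∑ y ∈ Icc j i, S i y * M y j = if j = i then 1 else 0)
    (A : α → R) (N : α) :
    ∑ y ∈ Icc ⊥ N, S N y * ∑ z ∈ Icc ⊥ y, M y z * A z = A N := by
  calc ∑ y ∈ Icc ⊥ N, S N y * ∑ z ∈ Icc ⊥ y, M y z * A z
      = ∑ y ∈ Icc ⊥ N, ∑ z ∈ Icc ⊥ y, S N y * M y z * A z := by simp only [mul_sum, mul_assoc]
    _ = ∑ z ∈ Icc ⊥ N, ∑ y ∈ Icc z N, S N y * M y z * A z := by
        refine sum_comm' fun y z => ?_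
        simp only [mem_Icc, bot_le, true_and]
        exact ⟨fun h => ⟨⟨h.2, h.1⟩, h.2.trans h.1⟩, fun h => ⟨h.1.2, h.1.1⟩⟩
    _ = ∑ z ∈ Icc ⊥ N, (if z = N then 1 else 0) * A z :=
        sum_congr rfl fun z hz => by rw [← sum_mul, hSM N z (mem_Icc.1 hz).2]
    _ = A N := by simp

theorem eq_sum_Icc_bot_mul_iff [DecidableEq α] {M S : α → α → R}
    (hSM : ∀ i j, j ≤ i → ∑ y ∈ Icc j i, S i y * M y j = if j = i then 1 else 0)
    (A B : α → R) :
    (∀ N, B N = ∑ y ∈ Icc ⊥ N, M N y * A y) ↔ ∀ N, A N = ∑ y ∈ Icc ⊥ N, S N y * B y := by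
  have hdiag (i : α) : S i i * M i i = 1 := by simpa using hSM i i le_rfl
  have hcomp := sum_Icc_bot_mul_sum_Icc_bot_mul hSM A
  refine ⟨fun hB N => by simp only [hB, hcomp], fun hA => congr_fun ?_⟩
  exact eq_of_sum_Icc_bot_mul_eq (fun i => .of_mul_eq_one _ (hdiag i))
    fun N => by rw [← hA, hcomp]

end TriangularInversion

section Lagrange

variable {K : Type*} [Field K]

theorem sum_nodalWeight_mul_eval_eq_zero {ι : Type*} [DecidableEq ι] {s : Finset ι} {v : ι → K}
    (hvs : Set.InjOn v s) {f : Polynomial K} (hf : f.natDegree + 1 < #s) :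
    ∑ i ∈ s, Lagrange.nodalWeight s v i * f.eval (v i) = 0 := by
  have hdeg : f.degree < #s := f.degree_le_natDegree.trans_lt (by exact_mod_cast by omega)
  rw [← f.coeff_eq_zero_of_natDegree_lt (n := #s - 1) (by omega), Lagrange.coeff_eq_sum hvs hdeg]
  simp only [Lagrange.nodalWeight, prod_inv_distrib, div_eq_mul_inv, mul_comm]

theorem sum_piFinset_det {R n κ : Type*} [CommRing R] [Fintype n] [DecidableEq n]
    (S : n → Finset κ) (g : n → κ → n → R) :
    ∑ z ∈ Fintype.piFinset S, (Matrix.of fun r => g r (z r)).det =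
      (Matrix.of fun r => ∑ t ∈ S r, g r t).det := by
  classical exact (Matrix.detRowAlternating.map_sum_finset g S).symm

-- The sum is the determinant of the matrix whose `(r, p)` entry is the part of
-- `∑ w(z) φ(z) z ^ p` over the nodes of class `r`; adding up its rows gives zero.
theorem sum_piFinset_det_vandermonde_mul_nodalWeight_eq_zero {ℓ : ℕ} (hℓ : ℓ ≠ 0) {κ : Type*}
    [DecidableEq κ] (S : Fin ℓ → Finset κ) {v : (_ : Fin ℓ) × κ → K}
    (hv : Set.InjOn v (univ.sigma S : Finset _)) {φ : Polynomial K}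
    (hφ : φ.natDegree + ℓ < #(univ.sigma S)) :
    ∑ z ∈ Fintype.piFinset S, (Matrix.vandermonde fun r => v ⟨r, z r⟩).det *
      ∏ r, (Lagrange.nodalWeight (univ.sigma S) v ⟨r, z r⟩ * φ.eval (v ⟨r, z r⟩)) = 0 := by
  set g : (_ : Fin ℓ) × κ → K := fun z =>
    Lagrange.nodalWeight (univ.sigma S) v z * φ.eval (v z)
  have hdet : (Matrix.of fun r =>
      ∑ t ∈ S r, fun p : Fin ℓ => g ⟨r, t⟩ * v ⟨r, t⟩ ^ (p : ℕ)).det = 0 := by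
    refine Matrix.exists_vecMul_eq_zero_iff.1 ⟨1, ?_, funext fun p => ?_⟩
    · exact Function.ne_iff.2 ⟨⟨0, Nat.pos_of_ne_zero hℓ⟩, one_ne_zero⟩
    · have hdeg : (φ * Polynomial.X ^ (p : ℕ)).natDegree + 1 < #(univ.sigma S) := by
        have := Polynomial.natDegree_mul_le (p := φ) (q := Polynomial.X ^ (p : ℕ))
        rw [Polynomial.natDegree_X_pow] at this
        omega
      have hsum := sum_nodalWeight_mul_eval_eq_zero hv hdeg
      simpa [Matrix.vecMul, dotProduct, sum_sigma, g, mul_assoc] using hsum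
  rw [← hdet, ← sum_piFinset_det]
  exact sum_congr rfl fun z _ => (mul_comm _ _).trans (Matrix.det_mul_column _ _).symm

end Lagrange

section Products

theorem choose_two_sum {ι : Type*} [Fintype ι] [LinearOrder ι] [LocallyFiniteOrderTop ι]
    [LocallyFiniteOrderBot ι] (n : ι → ℕ) :
    (∑ i, n i).choose 2 = ∑ i, (n i).choose 2 + ∑ i, ∑ j ∈ Ioi i, n j * n i := by
  have hoff : 2 * ∑ i, ∑ j ∈ Ioi i, n j * n i = ∑ i, ∑ j ∈ {i}ᶜ, n j * n i := by
    simp only [← sum_sum_Ioi_add_eq_sum_sum_off_diag (fun j i => n j * n i), mul_sum]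
    exact sum_congr rfl fun i _ => sum_congr rfl fun j _ => by ring
  have hsq : (∑ i, n i) * ∑ i, n i = ∑ i, n i * n i + 2 * ∑ i, ∑ j ∈ Ioi i, n j * n i := by
    rw [hoff, sum_mul_sum, sum_comm, ← sum_add_distrib]
    exact sum_congr rfl fun i _ => Fintype.sum_eq_add_sum_compl i _
  qify at hsq ⊢
  simp only [Nat.cast_choose_two, mul_sub, mul_one, sub_div, sum_sub_distrib, ← sum_div,
    Nat.cast_sum, hsq]
  ring

theorem prod_prod_eq_prod_diag_mul {ι M : Type*} [Fintype ι] [LinearOrder ι]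
    [LocallyFiniteOrderTop ι] [LocallyFiniteOrderBot ι] [CommMonoid M] (f : ι → ι → M) :
    ∏ i, ∏ j, f j i = (∏ i, f i i) * ∏ i, ∏ j ∈ Ioi i, f j i * f i j := by
  rw [prod_prod_Ioi_mul_eq_prod_prod_off_diag, ← prod_mul_distrib]
  exact prod_congr rfl fun i _ => Fintype.prod_eq_mul_prod_compl i _

theorem prod_prod_compl_sub_eq {R : Type*} [CommRing R] {ℓ : ℕ} (v : Fin ℓ → R) :
    ∏ i, ∏ j ∈ {i}ᶜ, (v i - v j) = (-1) ^ ℓ.choose 2 * (Matrix.vandermonde v).det ^ 2 := by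
  have hcard : ∑ i : Fin ℓ, #(Ioi i) = ℓ.choose 2 := by
    simpa using (choose_two_sum fun _ : Fin ℓ => 1).symm
  rw [← prod_prod_Ioi_mul_eq_prod_prod_off_diag (fun j i => v i - v j), Matrix.det_vandermonde,
    ← hcard, ← prod_pow_eq_pow_sum, ← prod_pow, ← prod_mul_distrib]
  refine prod_congr rfl fun i _ => ?_
  rw [← prod_pow, ← prod_const, ← prod_mul_distrib]
  exact prod_congr rfl fun j _ => by ring

-- Both sides multiply `f` along a boundary path of the rectangle `[a, m] × [b, n]`; pushing the
-- path across a unit cell costs a factor `q`.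
theorem prod_upper_path {M : Type*} [CommMonoid M] {q : M} {f : ℕ → ℕ → M}
    (hf : ∀ m n, f (m + 1) (n + 1) = q * f m n) {a b m n : ℕ} (ham : a ≤ m) (hbn : b ≤ n) :
    (∏ t ∈ Ico b n, f m t) * (∏ t ∈ Ico a m, f t n) * f m n =
      q ^ ((m - a) * (n - b)) *
        ((∏ t ∈ Ioc b n, f a t) * (∏ t ∈ Ioc a m, f t b) * f a b) := by
  induction m, ham using Nat.le_induction with
  | base =>
    simpa using (prod_Ico_mul_eq_prod_Icc hbn).trans (prod_Ioc_mul_eq_prod_Icc hbn).symm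
  | succ m ham ih =>
    have hrow : (∏ t ∈ Ico b n, f (m + 1) t) * f (m + 1) n =
        q ^ (n - b) * f (m + 1) b * ∏ t ∈ Ico b n, f m t := by
      rw [prod_Ico_mul_eq_prod_Icc hbn, ← mul_prod_Ioc_eq_prod_Icc hbn,
        ← Ico_add_one_add_one_eq_Ioc, ← prod_Ico_add']
      simp only [hf, prod_mul_distrib, prod_const, Nat.card_Ico]
      ac_rfl
    rw [prod_Ico_succ_top ham, prod_Ioc_succ_top ham, mul_right_comm, hrow, Nat.succ_sub ham,
      Nat.succ_mul, pow_add]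
    calc _ = q ^ (n - b) * f (m + 1) b *
          ((∏ t ∈ Ico b n, f m t) * (∏ t ∈ Ico a m, f t n) * f m n) := by ac_rfl
      _ = _ := by rw [ih]; ac_rfl

theorem prod_Ico_mul_pow_sub {R : Type*} [CommRing R] (q c : R) {j m : ℕ} (hjm : j ≤ m) :
    ∏ t ∈ Ico j m, (c * q ^ m - c * q ^ t) =
      (-1) ^ (m - j) * q ^ (m - j).choose 2 * ∏ t ∈ Ioc j m, (c * q ^ j - c * q ^ t) := by
  induction m, hjm using Nat.le_induction with
  | base => simp
  | succ m hjm ih =>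
    have hshift : ∏ t ∈ Ico (j + 1) (m + 1), (c * q ^ (m + 1) - c * q ^ t) =
        q ^ (m - j) * ∏ t ∈ Ico j m, (c * q ^ m - c * q ^ t) := by
      rw [← prod_Ico_add', ← Nat.card_Ico, ← prod_const, ← prod_mul_distrib]
      exact prod_congr rfl fun t _ => by ring
    rw [prod_eq_prod_Ico_succ_bot (by omega), hshift, ih, prod_Ioc_succ_top hjm,
      Nat.sub_add_comm hjm, Nat.choose_succ_succ' _ 1, Nat.choose_one_right]
    ring

end Products

section Nodes

variable {R : Type*} [CommRing R] {ℓ : ℕ}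

/-- The node `x_r q ^ t`, the `t`-th point of the geometric progression of class `r`. -/
def node (q : R) (x : Fin ℓ → R) (p : (_ : Fin ℓ) × ℕ) : R :=
  x p.1 * q ^ p.2

/-- The Vandermonde determinant of the nodes `x_r q ^ (y r)`. -/
def nodeVandermonde (q : R) (x : Fin ℓ → R) (y : Fin ℓ → ℕ) : R :=
  (Matrix.vandermonde fun r => node q x ⟨r, y r⟩).det

/-- The product of the differences between the bottom nodes `x_s q ^ (j s)` of the box `[j, i]` and
all nodes above the bottom. -/
def upperProd (q : R) (x : Fin ℓ → R) (i j : Fin ℓ → ℕ) : R :=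
  ∏ r, ∏ s, ∏ t ∈ Ioc (j r) (i r), (node q x ⟨s, j s⟩ - node q x ⟨r, t⟩)

/-- The product of the differences between the top nodes `x_s q ^ (i s)` of the box `[j, i]` and
all nodes below the top. -/
def lowerProd (q : R) (x : Fin ℓ → R) (i j : Fin ℓ → ℕ) : R :=
  ∏ r, ∏ s, ∏ t ∈ Ico (j r) (i r), (node q x ⟨s, i s⟩ - node q x ⟨r, t⟩)

variable (q : R) (x : Fin ℓ → R)

theorem prod_node_sub_pair {i j : Fin ℓ → ℕ} (hji : j ≤ i) (r s : Fin ℓ) :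
    (∏ t ∈ Ico (j r) (i r), (node q x ⟨s, i s⟩ - node q x ⟨r, t⟩)) *
        (∏ t ∈ Ico (j s) (i s), (node q x ⟨r, i r⟩ - node q x ⟨s, t⟩)) *
        (node q x ⟨s, i s⟩ - node q x ⟨r, i r⟩) =
      q ^ ((i s - j s) * (i r - j r)) *
        ((∏ t ∈ Ioc (j r) (i r), (node q x ⟨s, j s⟩ - node q x ⟨r, t⟩)) *
          (∏ t ∈ Ioc (j s) (i s), (node q x ⟨r, j r⟩ - node q x ⟨s, t⟩)) *
          (node q x ⟨s, j s⟩ - node q x ⟨r, j r⟩)) := by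
  have hpath := prod_upper_path (f := fun m n => node q x ⟨s, m⟩ - node q x ⟨r, n⟩) (q := q)
    (fun m n => by simp only [node]; ring) (hji s) (hji r)
  have hneg (T : Finset ℕ) (n : ℕ) : ∏ t ∈ T, (node q x ⟨r, n⟩ - node q x ⟨s, t⟩) =
      (-1) ^ #T * ∏ t ∈ T, (node q x ⟨s, t⟩ - node q x ⟨r, n⟩) := by
    simp only [← prod_neg, neg_sub]
  rw [hneg, hneg, Nat.card_Ico, Nat.card_Ioc]
  linear_combination (-1) ^ (i s - j s) * hpath

theorem lowerProd_mul_nodeVandermonde {i j : Fin ℓ → ℕ} (hji : j ≤ i) :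
    lowerProd q x i j * nodeVandermonde q x i =
      (-1) ^ (∑ r, i r - ∑ r, j r) * q ^ (∑ r, i r - ∑ r, j r).choose 2 *
        (upperProd q x i j * nodeVandermonde q x j) := by
  rw [← sum_tsub_distrib _ fun r _ => hji r, choose_two_sum]
  simp only [lowerProd, upperProd, nodeVandermonde, Matrix.det_vandermonde, pow_add,
    ← prod_pow_eq_pow_sum]
  rw [prod_prod_eq_prod_diag_mul
      fun s r => ∏ t ∈ Ico (j r) (i r), (node q x ⟨s, i s⟩ - node q x ⟨r, t⟩),
    prod_prod_eq_prod_diag_mul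
      fun s r => ∏ t ∈ Ioc (j r) (i r), (node q x ⟨s, j s⟩ - node q x ⟨r, t⟩)]
  have hdiag := prod_congr rfl fun r (_ : r ∈ univ) =>
    prod_Ico_mul_pow_sub q (x r) (hji r)
  have hpair := prod_congr rfl fun r (_ : r ∈ univ) =>
    prod_congr rfl fun s (_ : s ∈ Ioi r) => prod_node_sub_pair q x hji r s
  simp only [prod_mul_distrib] at hdiag hpair ⊢
  simp only [node] at hpair ⊢
  rw [hdiag]
  linear_combination ((∏ r, (-1) ^ (i r - j r)) * (∏ r, q ^ (i r - j r).choose 2) *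
    ∏ r, ∏ t ∈ Ioc (j r) (i r), (x r * q ^ j r - x r * q ^ t)) * hpair

end Nodes

section NodalWeights

theorem prod_Icc_eq_prod_Ico_mul_prod_Ioc {M : Type*} [CommMonoid M] (f : ℕ → M) {a b c : ℕ}
    (hab : a ≤ b) (hbc : b ≤ c) :
    ∏ t ∈ Icc a c, f t = (∏ t ∈ Ico a b, f t) * (∏ t ∈ Ioc b c, f t) * f b := by
  rw [← Ico_add_one_right_eq_Icc, ← prod_Ico_consecutive f hab (by omega : b ≤ c + 1),
    Ico_add_one_right_eq_Icc, mul_assoc, prod_Ioc_mul_eq_prod_Icc hbc]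

theorem prod_sigma_Icc_erase {ι M : Type*} [Fintype ι] [DecidableEq ι] [CommMonoid M]
    {i j y : ι → ℕ} (hjy : j ≤ y) (hyi : y ≤ i) (s : ι) (f : (_ : ι) × ℕ → M) :
    ∏ p ∈ (univ.sigma fun r => Icc (j r) (i r)).erase ⟨s, y s⟩, f p =
      (∏ r, ∏ t ∈ Ioc (y r) (i r), f ⟨r, t⟩) * (∏ r, ∏ t ∈ Ico (j r) (y r), f ⟨r, t⟩) *
        ∏ r ∈ {s}ᶜ, f ⟨r, y r⟩ := by
  set g := Function.update f ⟨s, y s⟩ 1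
  have hself : g ⟨s, y s⟩ = 1 := Function.update_self ..
  have hfg (p) (hp : p ≠ ⟨s, y s⟩) : f p = g p := (Function.update_of_ne hp _ _).symm
  have hclass (r : ι) : ∏ t ∈ Icc (j r) (i r), g ⟨r, t⟩ =
      (∏ t ∈ Ioc (y r) (i r), f ⟨r, t⟩) * (∏ t ∈ Ico (j r) (y r), f ⟨r, t⟩) * g ⟨r, y r⟩ := by
    rw [prod_Icc_eq_prod_Ico_mul_prod_Ioc _ (hjy r) (hyi r), mul_comm (∏ t ∈ Ico _ _, _)]
    congr 2 <;> refine prod_congr rfl fun t ht => (hfg _ ?_).symm <;>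
      (rintro ⟨⟩; simp at ht)
  rw [prod_congr rfl fun p hp => hfg p (ne_of_mem_erase hp), prod_erase _ hself, prod_sigma]
  simp only [hclass, prod_mul_distrib]
  rw [Fintype.prod_eq_mul_prod_compl s (fun r => g ⟨r, y r⟩), hself, one_mul]
  exact congrArg _ (prod_congr rfl fun r hr => (hfg _ (by rintro ⟨⟩; simp at hr)).symm)

variable {K : Type*} [Field K] {ℓ : ℕ} {q : K} {x : Fin ℓ → K} {i j y : Fin ℓ → ℕ}

theorem prod_nodalWeight_node (hjy : j ≤ y) (hyi : y ≤ i) :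
    ∏ r, Lagrange.nodalWeight (univ.sigma fun r => Icc (j r) (i r)) (node q x) ⟨r, y r⟩ =
      (upperProd q x i y * lowerProd q x y j *
        ((-1) ^ ℓ.choose 2 * nodeVandermonde q x y ^ 2))⁻¹ := by
  simp only [Lagrange.nodalWeight, prod_inv_distrib, prod_sigma_Icc_erase hjy hyi,
    prod_mul_distrib, upperProd, lowerProd, nodeVandermonde, ← prod_prod_compl_sub_eq]
  rw [← mul_inv, ← mul_inv]
  congr 3 <;> exact prod_comm

theorem nodeVandermonde_ne_zero (hinj : Function.Injective (node q x)) (y : Fin ℓ → ℕ) :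
    nodeVandermonde q x y ≠ 0 :=
  Matrix.det_vandermonde_ne_zero_iff.2 fun _ _ h => congrArg Sigma.fst (hinj h)

theorem inv_upperProd_mul_upperProd (hq : q ≠ 0) (hinj : Function.Injective (node q x))
    (hjy : j ≤ y) (hyi : y ≤ i) :
    (upperProd q x i y * upperProd q x y j)⁻¹ =
      (-1) ^ (ℓ.choose 2 + (∑ r, y r - ∑ r, j r)) * q ^ (∑ r, y r - ∑ r, j r).choose 2 *
        nodeVandermonde q x j * (nodeVandermonde q x y *
          ∏ r, Lagrange.nodalWeight (univ.sigma fun r => Icc (j r) (i r)) (node q x) ⟨r, y r⟩) := by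
  have hVy := nodeVandermonde_ne_zero hinj y
  have hVj := nodeVandermonde_ne_zero hinj j
  have hL : lowerProd q x y j = (-1) ^ (∑ r, y r - ∑ r, j r) *
      q ^ (∑ r, y r - ∑ r, j r).choose 2 * (upperProd q x y j * nodeVandermonde q x j) /
        nodeVandermonde q x y :=
    eq_div_of_mul_eq hVy (lowerProd_mul_nodeVandermonde q x hjy)
  have hsign (m : ℕ) : (((-1) ^ m : K))⁻¹ = (-1) ^ m := by simp [← inv_pow]
  rw [prod_nodalWeight_node hjy hyi, hL]
  simp only [pow_add, mul_inv, div_eq_mul_inv, inv_inv, hsign]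
  field_simp
  simp [← pow_mul]

/-- The product of the `q`-shifted factorials in the denominators common to both Bailey transform
matrices: for `t = j r + k + 1`, the factor `1 - x_r q ^ t / (x_s q ^ (j s))` is
`1 - (q x_r / x_s) q ^ (j r - j s) q ^ k`. -/
def kernelDenom (q : K) (x : Fin ℓ → K) (i j : Fin ℓ → ℕ) : K :=
  ∏ r, ∏ s, ∏ t ∈ Ioc (j r) (i r), (1 - node q x ⟨r, t⟩ / node q x ⟨s, j s⟩)

theorem kernelDenom_eq_upperProd_div (hq : q ≠ 0) (hx : ∀ r, x r ≠ 0) (hji : j ≤ i) :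
    kernelDenom q x i j =
      upperProd q x i j / ((∏ r, x r) * q ^ ∑ r, j r) ^ (∑ r, i r - ∑ r, j r) := by
  have hpow : ((∏ r, x r) * q ^ ∑ r, j r) ^ (∑ r, i r - ∑ r, j r) =
      ∏ r, ∏ s, ∏ _t ∈ Ioc (j r) (i r), node q x ⟨s, j s⟩ := by
    rw [← sum_tsub_distrib _ fun r _ => hji r]
    simp only [node, prod_const, Nat.card_Ioc, prod_pow, prod_mul_distrib, prod_pow_eq_pow_sum]
  rw [hpow, upperProd, kernelDenom]
  simp only [← prod_div_distrib]
  refine prod_congr rfl fun r _ => prod_congr rfl fun s _ => prod_congr rfl fun t _ => ?_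
  have hs : node q x ⟨s, j s⟩ ≠ 0 := mul_ne_zero (hx s) (pow_ne_zero (j s) hq)
  rw [sub_div, div_self hs]

theorem exists_kernelDenom_weight_eq (hq : q ≠ 0) (hx : ∀ r, x r ≠ 0)
    (hinj : Function.Injective (node q x)) (i j : Fin ℓ → ℕ) :
    ∃ κ : K, ∀ y ∈ Icc j i,
      (-1) ^ (∑ r, i r - ∑ r, y r) * q ^ (∑ r, i r - ∑ r, y r).choose 2 *
          ((kernelDenom q x i y)⁻¹ * (kernelDenom q x y j)⁻¹) =
        κ * (nodeVandermonde q x y * ∏ r,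
          Lagrange.nodalWeight (univ.sigma fun r => Icc (j r) (i r)) (node q x) ⟨r, y r⟩) := by
  refine ⟨(-1) ^ (ℓ.choose 2 + (∑ r, i r - ∑ r, j r)) *
    q ^ ((∑ r, i r - ∑ r, j r).choose 2 + (∑ r, j r) * (∑ r, i r - ∑ r, j r)) *
    (∏ r, x r) ^ (∑ r, i r - ∑ r, j r) * nodeVandermonde q x j, fun y hy => ?_⟩
  obtain ⟨hjy, hyi⟩ := mem_Icc.1 hy
  have hU := inv_upperProd_mul_upperProd hq hinj hjy hyi
  rw [kernelDenom_eq_upperProd_div hq hx hjy, kernelDenom_eq_upperProd_div hq hx hyi]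
  obtain ⟨n, hn⟩ := Nat.exists_eq_add_of_le (sum_le_sum fun r (_ : r ∈ univ) => hjy r)
  obtain ⟨e, he⟩ := Nat.exists_eq_add_of_le (sum_le_sum fun r (_ : r ∈ univ) => hyi r)
  have hchoose : (n + e).choose 2 = n.choose 2 + e.choose 2 + e * n := by
    qify
    simp only [Nat.cast_choose_two, Nat.cast_add]
    ring
  rw [hn, Nat.add_sub_cancel_left] at hU
  rw [he, hn, Nat.add_sub_cancel_left, Nat.add_sub_cancel_left, add_assoc,
    Nat.add_sub_cancel_left, hchoose]
  simp only [div_eq_mul_inv, pow_add, pow_mul, mul_pow, mul_inv, inv_inv] at hU ⊢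
  generalize ∑ r, j r = J at hU ⊢
  linear_combination (-1) ^ e * q ^ e.choose 2 * (∏ r, x r) ^ e * (q ^ J) ^ e * (q ^ n) ^ e *
    (∏ r, x r) ^ n * (q ^ J) ^ n * hU

theorem sum_kernelDenom_mul_prod_eval_eq_zero (hℓ : ℓ ≠ 0) (hq : q ≠ 0) (hx : ∀ r, x r ≠ 0)
    (hinj : Function.Injective (node q x)) (hji : j ≤ i) {φ : Polynomial K}
    (hφ : φ.natDegree < ∑ r, i r - ∑ r, j r) :
    ∑ y ∈ Icc j i, (-1) ^ (∑ r, i r - ∑ r, y r) * q ^ (∑ r, i r - ∑ r, y r).choose 2 *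
        ((kernelDenom q x i y)⁻¹ * (kernelDenom q x y j)⁻¹) *
          ∏ r, φ.eval (node q x ⟨r, y r⟩) = 0 := by
  have hcard : #(univ.sigma fun r => Icc (j r) (i r)) = ∑ r, i r - ∑ r, j r + ℓ := by
    rw [card_sigma, ← sum_tsub_distrib _ fun r _ => hji r]
    have hIcc (r : Fin ℓ) : #(Icc (j r) (i r)) = i r - j r + 1 := by
      rw [Nat.card_Icc, Nat.sub_add_comm (hji r)]
    simp [hIcc, sum_add_distrib]
  have hzero := sum_piFinset_det_vandermonde_mul_nodalWeight_eq_zero hℓ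
    (fun r => Icc (j r) (i r)) hinj.injOn (φ := φ) (by omega)
  rw [← Pi.Icc_eq] at hzero
  obtain ⟨κ, hκ⟩ := exists_kernelDenom_weight_eq hq hx hinj i j
  rw [← mul_zero κ, ← hzero, mul_sum]
  refine sum_congr rfl fun y hy => ?_
  rw [hκ y hy, prod_mul_distrib, nodeVandermonde]
  ring

end NodalWeights

section BaileyMatrices

theorem qp_natCast (b q : ℂ) (n : ℕ) : qp b q n = ∏ k ∈ range n, (1 - b * q ^ k) := by
  simp [qp]

theorem qp_natCast_add_mul_inv (b q : ℂ) (m n : ℕ) (hb : qp b q m ≠ 0) :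
    qp b q (m + n : ℕ) * (qp b q m)⁻¹ = ∏ k ∈ range n, (1 - b * q ^ (m + k)) := by
  rw [mul_inv_eq_iff_eq_mul₀ hb, qp_natCast, qp_natCast, prod_range_add, mul_comm]

theorem qp_natCast_eq_mul_qp_sub_one {b q : ℂ} (hq : q ≠ 0) (hb : 1 - b ≠ 0) (n : ℕ) :
    qp (b * q) q n = (1 - b * q ^ n) * qp (b * q) q (n - 1) := by
  cases n with
  | zero => simp [qp, hq, hb]
  | succ n =>
    rw [Nat.cast_succ, add_sub_cancel_right, ← Nat.cast_succ, qp_natCast, qp_natCast,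
      prod_range_succ, pow_succ', mul_assoc, mul_comm]

theorem mul_sub_one_ediv_two_eq_choose (n : ℕ) :
    (n : ℤ) * ((n : ℤ) - 1) / 2 = (n.choose 2 : ℕ) := by
  rw [Nat.choose_two_right]
  cases n <;> simp

variable {ℓ : ℕ} {q a xl : ℂ} {x : Fin ℓ → ℂ} {i j : Fin ℓ → ℕ}

theorem qp_eq_prod_one_sub_node_div (hq : q ≠ 0) (hji : j ≤ i) (r s : Fin ℓ) :
    qp (q * (x r / x s) * q ^ ((j r : ℤ) - (j s : ℤ))) q ((i r : ℤ) - (j r : ℤ)) =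
      ∏ t ∈ Ioc (j r) (i r), (1 - node q x ⟨r, t⟩ / node q x ⟨s, j s⟩) := by
  rw [← Nat.cast_sub (hji r), qp_natCast, ← Ico_add_one_add_one_eq_Ioc, prod_Ico_eq_prod_range,
    Nat.add_sub_add_right]
  refine prod_congr rfl fun t _ => ?_
  rw [zpow_sub₀ hq, zpow_natCast, zpow_natCast, node, node, pow_add, pow_succ]
  ring

theorem node_injective_of_qp_ne_zero (hq : q ≠ 0) (hx : ∀ k, x k ≠ 0)
    (hqp : ∀ i j : Fin ℓ → ℕ, j ≤ i → ∀ r s : Fin ℓ,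
      qp (q * (x r / x s) * q ^ ((j r : ℤ) - (j s : ℤ))) q ((i r : ℤ) - (j r : ℤ)) ≠ 0) :
    Function.Injective (node q x) := by
  have hne {i j : Fin ℓ → ℕ} (hji : j ≤ i) {r : Fin ℓ} {t : ℕ} (ht : t ∈ Ioc (j r) (i r))
      (s : Fin ℓ) : node q x ⟨r, t⟩ ≠ node q x ⟨s, j s⟩ := fun h => by
    have hfactor := prod_ne_zero_iff.1 (qp_eq_prod_one_sub_node_div hq hji r s ▸ hqp i j hji r s)
    have hs : node q x ⟨s, j s⟩ ≠ 0 := mul_ne_zero (hx s) (pow_ne_zero _ hq)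
    exact hfactor t ht (by rw [h, div_self hs, sub_self])
  have hsame (r : Fin ℓ) {m n : ℕ} (hmn : m < n) : node q x ⟨r, n⟩ ≠ node q x ⟨r, m⟩ :=
    hne (i := fun _ => n) (j := fun _ => m) (fun _ => hmn.le) (by simpa) r
  rintro ⟨r, m⟩ ⟨s, n⟩ h
  obtain rfl | hrs := eq_or_ne r s
  · rcases lt_trichotomy m n with hmn | rfl | hmn
    · exact absurd h.symm (hsame r hmn)
    · rfl
    · exact absurd h (hsame r hmn)
  · have hle : Function.update (fun _ => n + 1) r 0 ≤ Function.update (fun _ => n + 1) r (m + 1) :=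
      Function.update_mono (Nat.zero_le _)
    refine absurd ?_ (hne hle (r := r) (t := m + 1) (by simp) s)
    simp only [node, Function.update_of_ne hrs.symm, pow_succ, ← mul_assoc] at h ⊢
    rw [h]

theorem MA_eq (hq : q ≠ 0) (hji : j ≤ i) :
    MA ℓ q a x xl i j = (kernelDenom q x i j)⁻¹ *
      ∏ k, (qp (a * (x k / xl) * q) q (i k + ∑ s, j s : ℕ))⁻¹ := by
  simp only [MA, qp_eq_prod_one_sub_node_div hq hji, prod_inv_distrib, kernelDenom,
    mul_right_comm a q, Nat.cast_add, Nat.cast_sum]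

theorem MAstar_eq (hq : q ≠ 0) (hji : j ≤ i) :
    MAstar ℓ q a x xl i j =
      (∏ k, (1 - a * (x k / xl) * q ^ (i k + ∑ s, i s))) *
        (∏ k, qp (a * (x k / xl) * q) q ((j k + ∑ s, i s : ℕ) - 1)) *
        ((-1) ^ (∑ s, i s - ∑ s, j s) * q ^ (∑ s, i s - ∑ s, j s).choose 2 *
          (kernelDenom q x i j)⁻¹) := by
  have hsub : ((∑ s, i s : ℕ) : ℤ) - (∑ s, j s : ℕ) = (∑ s, i s - ∑ s, j s : ℕ) :=
    (Nat.cast_sub (sum_le_sum fun s _ => hji s)).symm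
  simp only [MAstar, qp_eq_prod_one_sub_node_div hq hji, prod_inv_distrib, kernelDenom,
    ← Nat.cast_sum, hsub, ← Nat.cast_add, mul_sub_one_ediv_two_eq_choose, zpow_natCast,
    mul_right_comm a q]
  ac_rfl

/-- The polynomial `(c q ^ m z; q)_n` in `z`. With `c = a q / x_ℓ`, the ratio of the `q`-shifted
factorials that involve `a` and `x_k` is its value at the node `z = x_k q ^ (y k)`, so that one
polynomial serves all `k`. -/
noncomputable def qpRatio (q c : ℂ) (m n : ℕ) : Polynomial ℂ :=
  ∏ k ∈ range n, (1 - Polynomial.C (c * q ^ (m + k)) * Polynomial.X)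

theorem natDegree_qpRatio_le (q c : ℂ) (m n : ℕ) : (qpRatio q c m n).natDegree ≤ n := by
  refine (Polynomial.natDegree_prod_le _ _).trans ((sum_le_card_nsmul _ _ 1 fun k _ => ?_).trans ?_)
  · simpa using Polynomial.natDegree_sub_le_of_le Polynomial.natDegree_one.le
      ((Polynomial.natDegree_C_mul_le (c * q ^ (m + k)) _).trans Polynomial.natDegree_X_le)
  · simp

theorem eval_qpRatio_node {k : Fin ℓ} {t m n : ℕ}
    (hqp : qp (a * (x k / xl) * q) q (t + m : ℕ) ≠ 0) :
    (qpRatio q (a / xl * q) m n).eval (node q x ⟨k, t⟩) =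
      qp (a * (x k / xl) * q) q (t + m + n : ℕ) * (qp (a * (x k / xl) * q) q (t + m : ℕ))⁻¹ := by
  rw [qp_natCast_add_mul_inv _ _ _ _ hqp]
  simp only [qpRatio, node, Polynomial.eval_prod, Polynomial.eval_sub, Polynomial.eval_one,
    Polynomial.eval_C_mul, Polynomial.eval_X]
  exact prod_congr rfl fun _ _ => by ring

theorem MAstar_mul_MA_self (hq : q ≠ 0) (hqp : ∀ k, qp (a * (x k / xl) * q) q
    (i k + ∑ s, i s : ℕ) ≠ 0) (ha : ∀ k, 1 - a * (x k / xl) ≠ 0) :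
    MAstar ℓ q a x xl i i * MA ℓ q a x xl i i = 1 := by
  have hone : kernelDenom q x i i = 1 := by simp [kernelDenom]
  simp only [MAstar_eq hq le_rfl, MA_eq hq le_rfl, hone, ← prod_mul_distrib, tsub_self, pow_zero,
    Nat.choose_zero_succ, inv_one, mul_one, one_mul, ← qp_natCast_eq_mul_qp_sub_one hq (ha _)]
  exact prod_eq_one fun k _ => mul_inv_cancel₀ (hqp k)

theorem sum_MAstar_mul_MA_eq_zero (hℓ : ℓ ≠ 0) (hq : q ≠ 0) (hx : ∀ k, x k ≠ 0)
    (hinj : Function.Injective (node q x))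
    (hqp : ∀ i j : Fin ℓ → ℕ, j ≤ i → ∀ k, qp (a * (x k / xl) * q) q (i k + ∑ s, j s : ℕ) ≠ 0)
    (hji : j < i) :
    ∑ y ∈ Icc j i, MAstar ℓ q a x xl i y * MA ℓ q a x xl y j = 0 := by
  have hlt : ∑ s, j s < ∑ s, i s := Fintype.sum_strictMono hji
  obtain ⟨n, hn⟩ := Nat.exists_eq_add_of_lt hlt
  set φ := qpRatio q (a / xl * q) (∑ s, j s) n
  have hzero := sum_kernelDenom_mul_prod_eval_eq_zero hℓ hq hx hinj hji.le (φ := φ)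
    ((natDegree_qpRatio_le ..).trans_lt (by omega))
  rw [← mul_zero (∏ k, (1 - a * (x k / xl) * q ^ (i k + ∑ s, i s))), ← hzero, mul_sum]
  refine sum_congr rfl fun y hy => ?_
  obtain ⟨hjy, hyi⟩ := mem_Icc.1 hy
  have hratio (k : Fin ℓ) : φ.eval (node q x ⟨k, y k⟩) =
      qp (a * (x k / xl) * q) q ((y k + ∑ s, i s : ℕ) - 1) *
        (qp (a * (x k / xl) * q) q (y k + ∑ s, j s : ℕ))⁻¹ := by
    have hcast : ((y k + ∑ s, i s : ℕ) : ℤ) - 1 = (y k + ∑ s, j s + n : ℕ) := by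
      rw [hn]
      push_cast
      ring
    rw [hcast, eval_qpRatio_node (hqp y j hjy k)]
  simp only [MAstar_eq hq hyi, MA_eq hq hjy, hratio, prod_mul_distrib]
  ring

theorem sum_MAstar_mul_MA_eq_ite (hℓ : ℓ ≠ 0) (hq : q ≠ 0) (hx : ∀ k, x k ≠ 0)
    (hinj : Function.Injective (node q x))
    (hqp : ∀ i j : Fin ℓ → ℕ, j ≤ i → ∀ k, qp (a * (x k / xl) * q) q (i k + ∑ s, j s : ℕ) ≠ 0)
    (ha : ∀ k, 1 - a * (x k / xl) ≠ 0) (hji : j ≤ i) :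
    ∑ y ∈ Icc j i, MAstar ℓ q a x xl i y * MA ℓ q a x xl y j = if j = i then 1 else 0 := by
  split_ifs with h
  · rw [h, Icc_self, sum_singleton, MAstar_mul_MA_self hq (hqp i i le_rfl) ha]
  · exact sum_MAstar_mul_MA_eq_zero hℓ hq hx hinj hqp (lt_of_le_of_ne hji h)

end BaileyMatrices

end AlBailey

/-- **A_ℓ Bailey Pair Inversion.**
`B_N = ∑_{0 ≤ y ≤ N} M(N;y) A_y` for all `N` iff
`A_N = ∑_{0 ≤ y ≤ N} M*(N;y) B_y` for all `N`. -/
theorem Al_bailey_pair_inversion (ℓ : ℕ) (hℓ : 1 ≤ ℓ) (q a : ℂ)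
    (hq : q ≠ 0) (ha : a ≠ 0) (x : Fin ℓ → ℂ) (hx : ∀ k, x k ≠ 0)
    (xl : ℂ) (hxl : xl = x ⟨ℓ - 1, by omega⟩)
    (hd1 : ∀ i j : Fin ℓ → ℕ, (∀ k, j k ≤ i k) → ∀ r s : Fin ℓ,
      qp (q * (x r / x s) * q ^ ((j r : ℤ) - (j s : ℤ))) q ((i r : ℤ) - (j r : ℤ)) ≠ 0)
    (hd2 : ∀ i j : Fin ℓ → ℕ, (∀ k, j k ≤ i k) → ∀ k : Fin ℓ,
      qp (a * q * (x k / xl)) q ((i k : ℤ) + ∑ s, (j s : ℤ)) ≠ 0)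
    (hd3 : ∀ k : Fin ℓ, (1 : ℂ) - a * (x k / xl) ≠ 0)
    (A B : (Fin ℓ → ℕ) → ℂ) :
    (∀ N : Fin ℓ → ℕ, B N = ∑ y ∈ Finset.Icc 0 N, MA ℓ q a x xl N y * A y) ↔
      (∀ N : Fin ℓ → ℕ, A N = ∑ y ∈ Finset.Icc 0 N, MAstar ℓ q a x xl N y * B y) := by
  have hinj := AlBailey.node_injective_of_qp_ne_zero hq hx hd1
  have hqp (i j : Fin ℓ → ℕ) (hji : j ≤ i) (k : Fin ℓ) :
      qp (a * (x k / xl) * q) q (i k + ∑ s, j s : ℕ) ≠ 0 := by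
    simpa only [mul_right_comm a q, Nat.cast_add, Nat.cast_sum] using hd2 i j hji k
  exact AlBailey.eq_sum_Icc_bot_mul_iff
    (fun i j => AlBailey.sum_MAstar_mul_MA_eq_ite (by omega) hq hx hinj hqp hd3) A B
end

section
/- (C_ℓ Bailey Pair Inversion.) Let ℓ ≥ 1, let q, x_1, …, x_ℓ be nonzero complex numbers such that every q-shifted factorial occurring in a denominator below is nonzero. Let M and M* be the C_ℓ Bailey transform matrices: M(i;j) := ∏_{r,s=1}^{ℓ} [ ((q x_r/x_s) q^{j_r−j_s}; q)_{i_r−j_r}^{−1} · (q x_r x_s q^{j_r+j_s}; q)_{i_r−j_r}^{−1} ], and M*(i;j) := ∏_{r,s=1}^{ℓ} [ ((q x_r/x_s) q^{j_r−j_s}; q)_{i_r−j_r}^{−1} · (x_r x_s q^{j_r+i_s}; q)_{i_r−j_r}^{−1} ] · ∏_{1≤r<s≤ℓ} (1 − x_r x_s q^{j_r+j_s})/(1 − x_r x_s q^{i_r+i_s}) · (−1)^{|i|−|j|} q^{binom(|i|−|j|,2)}. Let A = {A_y} and B = {B_y} be sequences of complex numbers indexed by vectors y of nonnegative integers of length ℓ.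 Then B_N = ∑_{0 ≤ y_k ≤ N_k, k=1,…,ℓ} M(N;y) A_y holds for every vector N of nonnegative integers if and only if A_N = ∑_{0 ≤ y_k ≤ N_k, k=1,…,ℓ} M*(N;y) B_y holds for every vector N of nonnegative integers. -/
set_option autoImplicit false
set_option maxHeartbeats 1000000

open Finset

/-- The `C_ℓ` Bailey transform matrix `M(i;j)`. -/
noncomputable def MC (ℓ : ℕ) (q : ℂ) (x : Fin ℓ → ℂ) (i j : Fin ℓ → ℕ) : ℂ :=
  ∏ r, ∏ s,
    ((qp (q * (x r / x s) * q ^ ((j r : ℤ) - (j s : ℤ))) q ((i r : ℤ) - (j r : ℤ)))⁻¹ *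
     (qp (q * (x r * x s) * q ^ ((j r : ℤ) + (j s : ℤ))) q ((i r : ℤ) - (j r : ℤ)))⁻¹)

/-- The `C_ℓ` Bailey transform matrix `M*(i;j)`. -/
noncomputable def MCstar (ℓ : ℕ) (q : ℂ) (x : Fin ℓ → ℂ) (i j : Fin ℓ → ℕ) : ℂ :=
  (∏ r, ∏ s,
    ((qp (q * (x r / x s) * q ^ ((j r : ℤ) - (j s : ℤ))) q ((i r : ℤ) - (j r : ℤ)))⁻¹ *
     (qp ((x r * x s) * q ^ ((j r : ℤ) + (i s : ℤ))) q ((i r : ℤ) - (j r : ℤ)))⁻¹)) *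
  (∏ r, ∏ s, if r < s then
      (1 - x r * x s * q ^ ((j r : ℤ) + (j s : ℤ))) /
        (1 - x r * x s * q ^ ((i r : ℤ) + (i s : ℤ)))
    else 1) *
  (-1 : ℂ) ^ ((∑ s, (i s : ℤ)) - ∑ s, (j s : ℤ)) *
  q ^ (((∑ s, (i s : ℤ)) - ∑ s, (j s : ℤ)) *
        ((∑ s, (i s : ℤ)) - (∑ s, (j s : ℤ)) - 1) / 2)

/-!
It suffices that `∑_y M*(n; y) M(y; j) = 0` for `j < n`, and replacing `x_r` by `x_r q^{j_r}`
reduces this to `j = 0`. Up to a factor independent of `y`, the summand is then a product over `r`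
of weights of the nodes `z_r = x_r q^{y_r}` times the Vandermonde product of the numbers
`z_r + z_r⁻¹`, so the sum is a multiple of the determinant of `L_r(X^k)`, `k < ℓ`, where
`L_r(p) = ∑_a weight(z) p(z + z⁻¹)` with `z = x_r q^a` and `0 ≤ a ≤ n_r`.

Let `S = {r | n_r ≠ 0}` and `D = ∏_{s ∉ S} (X - (x_s + x_s⁻¹))`. For `r ∉ S`, `L_r` vanishes on all
multiples of `D`. For `deg Q < |S|`, the sum `∑_{r ∈ S} L_r(D Q)` is, up to a constant, the divided
difference at the nodes `x_r q^a`, `r ∈ S`, of a polynomial of too small a degree, so it vanishes.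
Hence `Q ↦ (L_r(D Q))_{r ∈ S}` maps a space of dimension `|S|` into a hyperplane of `K^S`, and some
nonzero `Q` lies in its kernel; the coefficients of `D Q`, a polynomial of degree less than `ℓ`, are
then a nonzero vector annihilated by the matrix.
-/

open Polynomial

section Inversion

variable {α R : Type*} [PartialOrder α] [OrderBot α] [LocallyFiniteOrder α] [Ring R]

lemma sum_Icc_bot_comp (f g : α → α → R) (a : α → R) (N : α) :
    ∑ y ∈ Icc ⊥ N, g N y * ∑ j ∈ Icc ⊥ y, f y j * a j =
      ∑ j ∈ Icc ⊥ N, (∑ y ∈ Icc j N, g N y * f y j) * a j := by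
  simp only [mul_sum, sum_mul, mul_assoc]
  refine sum_comm' fun y j => ?_
  simp only [mem_Icc, bot_le, true_and]
  exact ⟨fun h => ⟨⟨h.2, h.1⟩, h.2.trans h.1⟩, fun h => ⟨h.1.2, h.1.1⟩⟩

lemma eq_of_forall_sum_Icc_bot_eq {g : α → α → R} (hg : ∀ N, g N N = 1)
    {b c : α → R} (h : ∀ N, ∑ y ∈ Icc ⊥ N, g N y * b y = ∑ y ∈ Icc ⊥ N, g N y * c y) : b = c := by
  classical
  have : WellFoundedLT α := StrictMono.wellFoundedLT (f := fun N => #(Icc ⊥ N))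
    fun _ N hN => card_lt_card (Icc_ssubset_Icc_right (bot_le : ⊥ ≤ N) le_rfl hN)
  funext N
  induction N using WellFoundedLT.induction with
  | ind N ih =>
    have hN : N ∈ Icc ⊥ N := right_mem_Icc.2 bot_le
    have hlower : ∀ y ∈ (Icc ⊥ N).erase N, g N y * b y = g N y * c y := fun y hy => by
      rw [ih y (lt_of_le_of_ne (mem_Icc.1 (mem_of_mem_erase hy)).2 (ne_of_mem_erase hy))]
    have key := h N
    rw [← add_sum_erase _ _ hN, ← add_sum_erase _ _ hN, sum_congr rfl hlower] at key
    simpa only [hg, one_mul] using add_right_cancel key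

theorem sum_Icc_bot_inversion {f g : α → α → R} (hf : ∀ N, f N N = 1)
    (hg : ∀ N, g N N = 1) (orth : ∀ j N, j < N → ∑ y ∈ Icc j N, g N y * f y j = 0)
    (a b : α → R) :
    (∀ N, b N = ∑ y ∈ Icc ⊥ N, f N y * a y) ↔ ∀ N, a N = ∑ y ∈ Icc ⊥ N, g N y * b y := by
  have comp (N : α) : ∑ y ∈ Icc ⊥ N, g N y * ∑ j ∈ Icc ⊥ y, f y j * a j = a N := by
    rw [sum_Icc_bot_comp, sum_eq_single_of_mem N (right_mem_Icc.2 bot_le)]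
    · simp [hf, hg]
    · intro j hj hne
      rw [orth j N (lt_of_le_of_ne (mem_Icc.1 hj).2 hne), zero_mul]
  refine ⟨fun h N => ?_, fun h => ?_⟩
  · simp only [h, comp]
  · refine congrFun (eq_of_forall_sum_Icc_bot_eq hg fun N => ?_)
    rw [comp, h]

end Inversion

section TriangularProducts

variable {ι M : Type*} [Fintype ι] [LinearOrder ι] [LocallyFiniteOrderTop ι]
  [LocallyFiniteOrderBot ι] [CommMonoid M]

lemma prod_prod_eq_prod_diag_mul_prod_Ioi (f : ι → ι → M) :
    ∏ r, ∏ s, f r s = (∏ r, f r r) * ∏ r, ∏ s ∈ Ioi r, f r s * f s r := by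
  rw [prod_prod_Ioi_mul_eq_prod_prod_off_diag fun s r => f r s, ← prod_mul_distrib]
  exact prod_congr rfl fun r _ => Fintype.prod_eq_mul_prod_compl r _

lemma choose_sum_two (d : ι → ℕ) :
    (∑ r, d r).choose 2 = ∑ r, (d r).choose 2 + ∑ r, ∑ s ∈ Ioi r, d r * d s := by
  have mul_self_eq (m : ℕ) : m * m = m + 2 * m.choose 2 := by
    induction m with
    | zero => rfl
    | succ m ih => rw [Nat.choose_succ_succ', Nat.choose_one_right]; linarith
  have offDiag : ∑ r, ∑ s ∈ Ioi r, 2 * (d r * d s) = ∑ r, ∑ s ∈ {r}ᶜ, d s * d r := by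
    rw [← sum_sum_Ioi_add_eq_sum_sum_off_diag fun s r => d s * d r]
    exact sum_congr rfl fun r _ => sum_congr rfl fun s _ => by ring
  have expand : (∑ r, d r) * ∑ s, d s =
      ∑ r, (d r + 2 * (d r).choose 2) + 2 * ∑ r, ∑ s ∈ Ioi r, d r * d s := by
    simp only [← mul_self_eq, mul_sum, offDiag, ← sum_add_distrib]
    exact sum_congr rfl fun r _ => by
      rw [Fintype.sum_eq_add_sum_compl r, add_mul, sum_mul]
  rw [mul_self_eq, sum_add_distrib, ← mul_sum] at expand
  omega

lemma pow_choose_sum_two (q : M) (d : ι → ℕ) :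
    q ^ (∑ r, d r).choose 2 =
      (∏ r, q ^ (d r).choose 2) * ∏ r, ∏ s ∈ Ioi r, q ^ (d r * d s) := by
  simp only [choose_sum_two, pow_add, prod_pow_eq_pow_sum]

end TriangularProducts

section Determinants

lemma sum_Icc_prod_mul_vandermonde {R : Type*} [CommRing R] {ℓ : ℕ} (n : Fin ℓ → ℕ)
    (g w : Fin ℓ → ℕ → R) :
    ∑ y ∈ Icc 0 n, (∏ r, g r (y r)) * ∏ r, ∏ s ∈ Ioi r, (w s (y s) - w r (y r)) =
      (Matrix.of fun r (k : Fin ℓ) => ∑ y ∈ range (n r + 1), g r y * w r y ^ (k : ℕ)).det := by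
  have rows : (Matrix.of fun r (k : Fin ℓ) => ∑ y ∈ range (n r + 1), g r y * w r y ^ (k : ℕ)) =
      fun r => ∑ y ∈ Icc 0 (n r), fun k : Fin ℓ => g r y * w r y ^ (k : ℕ) := by
    ext r k
    simp [Nat.range_succ_eq_Icc_zero]
  rw [rows]
  refine Eq.trans (sum_congr rfl fun y _ => ?_) (Matrix.detRowAlternating.map_sum_finset
    (fun r y (k : Fin ℓ) => g r y * w r y ^ (k : ℕ)) fun r => Icc 0 (n r)).symm
  rw [← Matrix.det_vandermonde fun r => w r (y r)]
  exact (Matrix.det_mul_column _ _).symm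

lemma exists_ne_zero_of_sum_linearFunctional_eq_zero {K V ι : Type*} [Field K] [AddCommGroup V]
    [Module K V] [Fintype ι] [Nonempty ι]
    (hV : Module.finrank K V = Fintype.card ι) {f : ι → V →ₗ[K] K} (hf : ∑ i, f i = 0) :
    ∃ v ≠ 0, ∀ i, f i v = 0 := by
  classical
  have := FiniteDimensional.of_finrank_pos (hV ▸ Fintype.card_pos)
  have not_surj : ¬ Function.Surjective (LinearMap.pi f) := fun hsurj => by
    obtain ⟨i⟩ := ‹Nonempty ι›
    obtain ⟨v, hv⟩ := hsurj (Pi.single i 1)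
    have total : ∑ j, LinearMap.pi f v j = 0 := by
      simp only [LinearMap.pi_apply, ← LinearMap.sum_apply, hf, LinearMap.zero_apply]
    rw [hv] at total
    simp at total
  rw [← LinearMap.injective_iff_surjective_of_finrank_eq_finrank (by simp [hV]),
    injective_iff_map_eq_zero] at not_surj
  push Not at not_surj
  obtain ⟨v, hv, hv0⟩ := not_surj
  exact ⟨v, hv0, congrFun hv⟩

lemma det_linearFunctional_X_pow_eq_zero_of_map_eq_zero {R : Type*} [CommRing R] [IsDomain R]
    {ℓ : ℕ} {L : Fin ℓ → R[X] →ₗ[R] R} {P : R[X]} (hP : P ≠ 0) (hdeg : P.natDegree < ℓ)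
    (hL : ∀ r, L r P = 0) : (Matrix.of fun r (k : Fin ℓ) => L r (X ^ (k : ℕ))).det = 0 := by
  rw [← Matrix.exists_mulVec_eq_zero_iff]
  refine ⟨fun k => P.coeff k, fun h => hP ?_, ?_⟩
  · ext k
    by_cases hk : k < ℓ
    · exact congrFun h ⟨k, hk⟩
    · exact coeff_eq_zero_of_natDegree_lt (by omega)
  · ext r
    have expand := hL r
    rw [P.as_sum_range_C_mul_X_pow' hdeg, map_sum, sum_range] at expand
    rw [Pi.zero_apply, ← expand, Matrix.mulVec, dotProduct]
    refine sum_congr rfl fun k _ => ?_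
    rw [← smul_eq_C_mul, map_smul, smul_eq_mul, mul_comm, Matrix.of_apply]

lemma det_linearFunctional_X_pow_eq_zero {K : Type*} [Field K] {ℓ : ℕ} (L : Fin ℓ → K[X] →ₗ[K] K)
    {S : Finset (Fin ℓ)} (hS : S.Nonempty) {D : K[X]} (hD : D ≠ 0) (hdeg : D.natDegree + #S ≤ ℓ)
    (hcompl : ∀ r ∉ S, ∀ Q, L r (D * Q) = 0)
    (hsum : ∀ Q ∈ degreeLT K #S, ∑ r ∈ S, L r (D * Q) = 0) :
    (Matrix.of fun r (k : Fin ℓ) => L r (X ^ (k : ℕ))).det = 0 := by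
  have := hS.to_subtype
  let f (r : S) : degreeLT K #S →ₗ[K] K :=
    L r ∘ₗ LinearMap.mulLeft K D ∘ₗ (degreeLT K #S).subtype
  have sum_eq_zero : ∑ r, f r = 0 := LinearMap.ext fun Q => by
    rw [LinearMap.sum_apply, LinearMap.zero_apply, ← hsum Q Q.2]
    exact sum_coe_sort S fun r => L r (D * Q)
  obtain ⟨Q, hQ0, hQ⟩ := exists_ne_zero_of_sum_linearFunctional_eq_zero
    (by rw [(degreeLTEquiv K #S).finrank_eq]; simp) sum_eq_zero
  have Q_ne : (Q : K[X]) ≠ 0 := fun h => hQ0 (Subtype.ext h)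
  have natDegree_lt : (D * Q).natDegree < ℓ := by
    have := (natDegree_lt_iff_degree_lt Q_ne).2 (mem_degreeLT.1 Q.2)
    have := natDegree_mul_le (p := D) (q := Q)
    omega
  refine det_linearFunctional_X_pow_eq_zero_of_map_eq_zero (mul_ne_zero hD Q_ne) natDegree_lt
    fun r => ?_
  by_cases hr : r ∈ S
  · exact hQ ⟨r, hr⟩
  · exact hcompl r hr Q

end Determinants

section PartialFractions

variable {K : Type*} [Field K]

lemma sum_eval_div_prod_sub_eq_zero {ι : Type*} [DecidableEq ι] {s : Finset ι} {v : ι → K}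
    (hv : Set.InjOn v s) {P : K[X]} (hP : P.natDegree + 1 < #s) :
    ∑ i ∈ s, P.eval (v i) / ∏ j ∈ s.erase i, (v i - v j) = 0 := by
  have degree_lt : P.degree < #s :=
    degree_le_natDegree.trans_lt (by exact_mod_cast (by omega : P.natDegree < #s))
  rw [← Lagrange.coeff_eq_sum hv degree_lt, coeff_eq_zero_of_natDegree_lt (by omega)]

lemma prod_erase_sigma {ι κ M : Type*} [DecidableEq ι] [DecidableEq κ] [CommMonoid M]
    {s : Finset ι} (t : ι → Finset κ) {i : ι} (hi : i ∈ s) (k : κ) (f : (_ : ι) × κ → M) :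
    ∏ p ∈ (s.sigma t).erase ⟨i, k⟩, f p =
      (∏ l ∈ (t i).erase k, f ⟨i, l⟩) * ∏ j ∈ s.erase i, ∏ l ∈ t j, f ⟨j, l⟩ := by
  have erase_eq : (s.sigma t).erase ⟨i, k⟩ =
      s.sigma fun j => if j = i then (t i).erase k else t j := by
    ext ⟨j, l⟩
    by_cases h : j = i
    · subst h; simp [hi]
    · simp [h]
  rw [erase_eq, prod_sigma, ← mul_prod_erase s _ hi, if_pos rfl]
  congr 1
  exact prod_congr rfl fun j hj => by rw [if_neg (ne_of_mem_erase hj)]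

lemma exists_eval_eq_pow_mul_eval_add_inv {d : ℕ} {Q : K[X]} (hQ : Q.natDegree ≤ d) :
    ∃ P : K[X], P.natDegree ≤ 2 * d ∧ ∀ z ≠ 0, P.eval z = z ^ d * Q.eval (z + z⁻¹) := by
  refine ⟨∑ k ∈ range (d + 1), C (Q.coeff k) * (X ^ (d - k) * (X ^ 2 + 1) ^ k), ?_, fun z hz => ?_⟩
  · refine natDegree_sum_le_of_forall_le _ _ fun k hk => ?_
    have hk' : d - k + k * 2 ≤ 2 * d := by have := mem_range.1 hk; omega
    refine (natDegree_C_mul_le _ _).trans (le_trans ?_ hk')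
    exact natDegree_mul_le_of_le (natDegree_X_pow_le _)
      (natDegree_pow_le_of_le k (by compute_degree))
  · rw [eval_eq_sum_range' (Nat.lt_succ_of_le hQ), eval_finsetSum, mul_sum]
    refine sum_congr rfl fun k hk => ?_
    have hzk : z ^ d = z ^ (d - k) * z ^ k := by
      rw [← pow_add, Nat.sub_add_cancel (Nat.le_of_lt_succ (mem_range.1 hk))]
    have hsq : z * (z + z⁻¹) = z ^ 2 + 1 := by field_simp
    simp only [eval_mul, eval_C, eval_pow, eval_X, eval_add, eval_one, hzk, ← hsq, mul_pow]
    ring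

end PartialFractions

section QShiftedFactorials

/-- The homogeneous `q`-shifted factorial `∏_{k<n} (u - v q^k) = u^n (v/u; q)_n`; with `u = 1` it is
`(v; q)_n`. -/
def qPoch {R : Type*} [CommRing R] (q u v : R) (n : ℕ) : R := ∏ k ∈ range n, (u - v * q ^ k)

section CommRing

variable {R : Type*} [CommRing R] (q u v : R)

@[simp] lemma qPoch_zero : qPoch q u v 0 = 1 := rfl

lemma qPoch_succ (n : ℕ) : qPoch q u v (n + 1) = qPoch q u v n * (u - v * q ^ n) :=
  prod_range_succ _ _

lemma qPoch_add (m n : ℕ) : qPoch q u v (m + n) = qPoch q u v m * qPoch q u (v * q ^ m) n := by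
  simp only [qPoch, prod_range_add, pow_add, mul_assoc]

lemma qPoch_succ' (n : ℕ) : qPoch q u v (n + 1) = (u - v) * qPoch q u (q * v) n := by
  rw [add_comm, qPoch_add]
  simp [qPoch, mul_comm]

lemma qPoch_mul_mul (c : R) (n : ℕ) : qPoch q (c * u) (c * v) n = c ^ n * qPoch q u v n := by
  simp only [qPoch, mul_assoc, ← mul_sub, prod_mul_distrib, prod_const, card_range]

lemma qPoch_ne_zero [IsDomain R] {q u v : R} (h : ∀ k, u ≠ v * q ^ k) (n : ℕ) :
    qPoch q u v n ≠ 0 :=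
  prod_ne_zero_iff.2 fun k _ => sub_ne_zero.2 (h k)

lemma qPoch_mul_qPoch_exchange (a b : ℕ) :
    qPoch q (u * q ^ a) v b * qPoch q (v * q ^ b) u (a + 1) =
      q ^ (a * b) * qPoch q v u (a + 1) * qPoch q u (q * v) b := by
  induction b with
  | zero => simp
  | succ b ih =>
    have scale : qPoch q (v * q ^ (b + 1)) (q * u) a = q ^ a * qPoch q (v * q ^ b) u a := by
      rw [← qPoch_mul_mul, pow_succ', mul_left_comm]
    have shift : qPoch q (v * q ^ (b + 1)) u (a + 1) * (v * q ^ b - u * q ^ a) =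
        (v * q ^ (b + 1) - u) * q ^ a * qPoch q (v * q ^ b) u (a + 1) := by
      rw [qPoch_succ', scale, qPoch_succ]
      ring
    rw [qPoch_succ, qPoch_succ q u]
    linear_combination q ^ a * (u - v * q ^ (b + 1)) * ih - qPoch q (u * q ^ a) v b * shift

lemma qPoch_mul_qPoch_add (a b m n : ℕ) :
    qPoch q (u * q ^ a) v (b + n + 1) * qPoch q (v * q ^ b) u (a + m + 1) =
      (u * q ^ a - v * q ^ b) * (v - u) * q ^ (a * b) * qPoch q v (q * u) a *
        qPoch q u (q * v) b * qPoch q (v * q ^ b) (q * (u * q ^ a)) m *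
        qPoch q (u * q ^ a) (q * (v * q ^ b)) n := by
  have split (z w : R) (i j : ℕ) : qPoch q z w (i + j + 1) =
      qPoch q z w i * (z - w * q ^ i) * qPoch q z (q * (w * q ^ i)) j := by
    rw [add_right_comm, qPoch_add, qPoch_succ, pow_succ]
    ring_nf
  have exchange := qPoch_mul_qPoch_exchange q u v a b
  rw [qPoch_succ, qPoch_succ'] at exchange
  rw [split, split]
  linear_combination (u * q ^ a - v * q ^ b) * qPoch q (u * q ^ a) (q * (v * q ^ b)) n *
    qPoch q (v * q ^ b) (q * (u * q ^ a)) m * exchange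

lemma prod_range_mul_pow_sub_mul_pow (a : ℕ) :
    ∏ k ∈ range a, (u * q ^ a - u * q ^ k) =
      (-1) ^ a * qPoch q 1 q a * (u ^ a * q ^ a.choose 2) := by
  induction a with
  | zero => simp
  | succ a ih =>
    have scale (k : ℕ) : u * q ^ (a + 1) - u * q ^ (k + 1) = q * (u * q ^ a - u * q ^ k) := by ring
    rw [prod_range_succ', qPoch_succ, Nat.choose_succ_succ' a, Nat.choose_one_right]
    simp only [scale, prod_mul_distrib, prod_const, card_range]
    linear_combination q ^ a * (u * q ^ (a + 1) - u) * ih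

lemma prod_erase_mul_pow_sub_mul_pow (a m : ℕ) :
    (∏ k ∈ (range (a + m + 1)).erase a, (u * q ^ a - u * q ^ k)) * q ^ m.choose 2 =
      (-1) ^ a * qPoch q 1 q a * qPoch q 1 q m * (u ^ (a + m) * q ^ (a + m).choose 2) := by
  induction m with
  | zero =>
    have erase_self : (range (a + 1)).erase a = range a := by simp [range_add_one]
    simp [erase_self, prod_range_mul_pow_sub_mul_pow]
  | succ m ih =>
    have erase_eq : (range (a + (m + 1) + 1)).erase a =
        insert (a + m + 1) ((range (a + m + 1)).erase a) := by
      rw [range_add_one, erase_insert_of_ne (by omega)]; rfl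
    rw [erase_eq, prod_insert (by simp), qPoch_succ, ← add_assoc, Nat.choose_succ_succ' (a + m),
      Nat.choose_succ_succ' m, Nat.choose_one_right, Nat.choose_one_right]
    simp only [pow_add]
    linear_combination (u * q ^ a - u * q ^ (a + m + 1)) * q ^ m * ih

lemma qPoch_two_mul_add_sub_one (a m : ℕ) :
    qPoch q u (q * v) (2 * (a + m) - 1) =
      qPoch q u (q * v) a * qPoch q u (q * (v * q ^ a)) (a + m - 1) *
        qPoch q u (v * q ^ (a + (a + m))) m := by
  rcases Nat.eq_zero_or_pos (a + m) with h | h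
  · obtain ⟨rfl, rfl⟩ : a = 0 ∧ m = 0 := by omega
    simp
  · obtain ⟨n, hn⟩ : ∃ n, a + m = n + 1 := ⟨a + m - 1, by omega⟩
    rw [show 2 * (a + m) - 1 = a + n + m by omega, hn, Nat.add_sub_cancel, qPoch_add, qPoch_add]
    ring_nf

end CommRing

section Field

variable {K : Type*} [Field K] {q : K}

lemma qPoch_eq_pow_mul {u : K} (hu : u ≠ 0) (v : K) (n : ℕ) :
    qPoch q u v n = u ^ n * qPoch q 1 (v / u) n := by
  rw [← qPoch_mul_mul, mul_one, mul_div_cancel₀ _ hu]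

/-- The `q`-shifted factorial `(q a; q)_{n-1} = (a; q)_n / (1 - a)`, extended to `n = 0`. -/
def qPochTail (q a : K) (n : ℕ) : K := qPoch q 1 a n / (1 - a)

lemma qPochTail_succ {a : K} (ha : a ≠ 1) (n : ℕ) :
    qPochTail q a (n + 1) = qPoch q 1 (q * a) n := by
  rw [qPochTail, qPoch_succ', mul_div_cancel_left₀ _ (sub_ne_zero.2 ha.symm)]

lemma qPochTail_add {σ : K} {a : ℕ} (h0 : σ ≠ 1) (ha : σ * q ^ a ≠ 1) (m n : ℕ) :
    qPochTail q σ (a + m + n) =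
      qPoch q 1 (q * σ) a * qPochTail q (σ * q ^ a) n * qPoch q 1 (σ * q ^ (a + n)) m := by
  have start : qPoch q 1 σ a / (1 - σ) = qPoch q 1 (q * σ) a / (1 - σ * q ^ a) := by
    rw [div_eq_div_iff (sub_ne_zero.2 h0.symm) (sub_ne_zero.2 ha.symm), ← qPoch_succ, qPoch_succ',
      mul_comm]
  calc qPochTail q σ (a + m + n)
      = qPoch q 1 σ a / (1 - σ) * (qPoch q 1 (σ * q ^ a) n * qPoch q 1 (σ * q ^ (a + n)) m) := by
        rw [qPochTail, add_right_comm, qPoch_add, qPoch_add, pow_add, ← mul_assoc]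
        ring
    _ = _ := by
        rw [start, qPochTail]
        ring

end Field

end QShiftedFactorials

section PairFactors

variable {K : Type*} [Field K]

/-- The map `z ↦ z + z⁻¹`, the coordinate in which the nodes `z` and `z⁻¹` coincide. -/
def addInv (z : K) : K := z + z⁻¹

lemma addInv_sub_addInv {z v : K} (hz : z ≠ 0) (hv : v ≠ 0) :
    addInv v - addInv z = (z - v) * (1 - z * v) / (z * v) := by
  simp only [addInv]
  field_simp
  ring

/-- The `(r, s)` factor of `M*(n; y) M(y; 0)`, apart from its linear and monomial factors, where
`u = x_r`, `v = x_s`, `a = y_r`, `b = y_s`, `m = n_r`, `n = n_s`. -/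
def pairFactor (q u v : K) (a b m n : ℕ) : K :=
  (qPoch q 1 (q * (u * q ^ a / (v * q ^ b))) (m - a) *
    qPoch q 1 (u * v * q ^ (a + n)) (m - a) *
    (qPoch q 1 (q * (u / v)) a * qPoch q 1 (q * (u * v)) a))⁻¹

/-- The part of the weight of a node `z = x_r q^a` contributed by an index `s ≠ r`, where `v = x_s`
and `n = n_s`. -/
def crossWeight (q v : K) (n : ℕ) (z : K) : K :=
  z * qPochTail q (z * v) n / qPoch q z v (n + 1)

/-- The part of the weight of the node `z = u q^a` that comes from its own row, where `u = x_r` and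
`m = n_r`. -/
def diagWeight (q u : K) (m a : ℕ) : K :=
  qPoch q 1 (q * (u * u * q ^ a)) (m - 1) /
    ∏ k ∈ (range (m + 1)).erase a, (u * q ^ a - u * q ^ k)

variable {q u v : K}

lemma qPoch_mul_qPoch_mul_pow (hq : q ≠ 0) (hu : u ≠ 0) (hv : v ≠ 0) (a b m n : ℕ) :
    qPoch q (u * q ^ a) v (b + n + 1) * qPoch q (v * q ^ b) u (a + m + 1) * q ^ (m * n) =
      (v - u) * u ^ (b + n) * v ^ (a + m) * q ^ ((a + m) * (b + n)) * (u * q ^ a - v * q ^ b) *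
        (qPoch q 1 (q * (u * q ^ a / (v * q ^ b))) m *
          qPoch q 1 (q * (v * q ^ b / (u * q ^ a))) n *
          (qPoch q 1 (q * (u / v)) a * qPoch q 1 (q * (v / u)) b)) := by
  rw [qPoch_mul_qPoch_add, qPoch_eq_pow_mul hu, qPoch_eq_pow_mul hv,
    qPoch_eq_pow_mul (mul_ne_zero hu (pow_ne_zero a hq)),
    qPoch_eq_pow_mul (mul_ne_zero hv (pow_ne_zero b hq))]
  simp only [mul_div_assoc]
  ring

lemma inv_qPoch_mul_inv_qPoch (hp : ∀ k, u * v * q ^ k ≠ 1) (a m n : ℕ) :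
    (qPoch q 1 (u * v * q ^ (a + n)) m * qPoch q 1 (q * (u * v)) a)⁻¹ =
      qPochTail q (u * v * q ^ a) n / qPochTail q (u * v) (a + m + n) := by
  have tail_ne : qPochTail q (u * v * q ^ a) n ≠ 0 :=
    div_ne_zero (qPoch_ne_zero (fun k => by simpa [mul_assoc, ← pow_add] using (hp (a + k)).symm) n)
      (sub_ne_zero.2 (hp a).symm)
  rw [qPochTail_add (by simpa using hp 0) (hp a), mul_right_comm _ (qPochTail _ _ _),
    div_mul_cancel_right₀ tail_ne, mul_comm]

lemma crossWeight_mul_crossWeight {z w : K} (hz : z ≠ 0) (hw : w ≠ 0) (m n : ℕ) :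
    crossWeight q v n z * crossWeight q u m w * (addInv w - addInv z) =
      (z - w) * (1 - z * w) * (qPochTail q (z * v) n * qPochTail q (w * u) m) /
        (qPoch q z v (n + 1) * qPoch q w u (m + 1)) := by
  rw [crossWeight, crossWeight, addInv_sub_addInv hz hw]
  field_simp

lemma pairFactor_mul_pairFactor (hq : q ≠ 0) (hu : u ≠ 0) (hv : v ≠ 0)
    (hne : ∀ a b, u * q ^ a ≠ v * q ^ b) (hp : ∀ k, u * v * q ^ k ≠ 1) {a b m n : ℕ}
    (ha : a ≤ m) (hb : b ≤ n) :
    pairFactor q u v a b m n * pairFactor q v u b a n m * q ^ ((m - a) * (n - b)) *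
        ((1 - u * v * q ^ (a + b)) / (1 - u * v * q ^ (m + n))) =
      (v - u) * u ^ n * v ^ m * q ^ (m * n) / qPochTail q (u * v) (m + n) ^ 2 /
          (1 - u * v * q ^ (m + n)) *
        (crossWeight q v n (u * q ^ a) * crossWeight q u m (v * q ^ b) *
          (addInv (v * q ^ b) - addInv (u * q ^ a))) := by
  obtain ⟨m, rfl⟩ := Nat.exists_eq_add_of_le ha
  obtain ⟨n, rfl⟩ := Nat.exists_eq_add_of_le hb
  have hz : u * q ^ a ≠ 0 := mul_ne_zero hu (pow_ne_zero a hq)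
  have hw : v * q ^ b ≠ 0 := mul_ne_zero hv (pow_ne_zero b hq)
  have nodes_ne : qPoch q (u * q ^ a) v (b + n + 1) * qPoch q (v * q ^ b) u (a + m + 1) ≠ 0 :=
    mul_ne_zero (qPoch_ne_zero (hne a) _) (qPoch_ne_zero (fun k => (hne k b).symm) _)
  have product := qPoch_mul_qPoch_mul_pow hq hu hv a b m n
  have quotients_ne := right_ne_zero_of_mul (product ▸ mul_ne_zero nodes_ne (pow_ne_zero _ hq))
  have typeA : q ^ (m * n) / _ = _ / _ :=
    (div_eq_div_iff quotients_ne nodes_ne).2 ((mul_comm _ _).trans product)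
  have typeC := inv_qPoch_mul_inv_qPoch hp a m (b + n)
  have typeC' := inv_qPoch_mul_inv_qPoch (q := q) (u := v) (v := u)
    (by simpa only [mul_comm v u] using hp) b n (a + m)
  calc _ = q ^ (m * n) / (qPoch q 1 (q * (u * q ^ a / (v * q ^ b))) m *
          qPoch q 1 (q * (v * q ^ b / (u * q ^ a))) n *
          (qPoch q 1 (q * (u / v)) a * qPoch q 1 (q * (v / u)) b)) *
        ((qPoch q 1 (u * v * q ^ (a + (b + n))) m * qPoch q 1 (q * (u * v)) a)⁻¹ *
          (qPoch q 1 (v * u * q ^ (b + (a + m))) n * qPoch q 1 (q * (v * u)) b)⁻¹) *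
        ((1 - u * v * q ^ (a + b)) / (1 - u * v * q ^ (a + m + (b + n)))) := by
        simp only [pairFactor, add_tsub_cancel_left, div_eq_mul_inv, mul_inv]
        ring
    _ = _ := by
        rw [typeA, typeC, typeC', crossWeight_mul_crossWeight hz hw, add_comm (b + n) (a + m),
          mul_comm v u, mul_right_comm u _ v, mul_right_comm v _ u, mul_comm v u,
          mul_mul_mul_comm u _ v, ← pow_add]
        ring

lemma pairFactor_self (hq : q ≠ 0) (hq1 : ∀ k, q ^ (k + 1) ≠ 1) (hu : u ≠ 0)
    (hp : ∀ k, u * u * q ^ (k + 1) ≠ 1) {a m : ℕ} (ha : a ≤ m) :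
    pairFactor q u u a a m m * ((-1) ^ (m - a) * q ^ (m - a).choose 2) =
      (-1) ^ m * u ^ m * q ^ m.choose 2 / qPoch q 1 (q * (u * u)) (2 * m - 1) *
        diagWeight q u m a := by
  obtain ⟨m, rfl⟩ := Nat.exists_eq_add_of_le ha
  have qq_ne (n : ℕ) : qPoch q 1 q n ≠ 0 :=
    qPoch_ne_zero (fun k => by simpa only [pow_succ'] using (hq1 k).symm) n
  have tail_ne : qPoch q 1 (q * (u * u * q ^ a)) (a + m - 1) ≠ 0 :=
    qPoch_ne_zero (fun k h => hp (a + k) (by linear_combination -h)) _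
  have nodes := prod_erase_mul_pow_sub_mul_pow q u a m
  have nodes_ne : ∏ k ∈ (range (a + m + 1)).erase a, (u * q ^ a - u * q ^ k) ≠ 0 :=
    left_ne_zero_of_mul (b := q ^ m.choose 2) (by simp [nodes, qq_ne, hq, hu])
  have typeA : q ^ m.choose 2 / (qPoch q 1 q a * qPoch q 1 q m) =
      (-1) ^ a * (u ^ (a + m) * q ^ (a + m).choose 2) /
        ∏ k ∈ (range (a + m + 1)).erase a, (u * q ^ a - u * q ^ k) := by
    rw [div_eq_div_iff (mul_ne_zero (qq_ne a) (qq_ne m)) nodes_ne]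
    linear_combination nodes
  calc _ = (-1) ^ m * (q ^ m.choose 2 / (qPoch q 1 q a * qPoch q 1 q m)) *
        (qPoch q 1 (q * (u * u)) a * qPoch q 1 (u * u * q ^ (a + (a + m))) m)⁻¹ := by
        simp only [pairFactor, add_tsub_cancel_left, div_self hu,
          div_self (mul_ne_zero hu (pow_ne_zero a hq)), mul_one, div_eq_mul_inv, mul_inv]
        ring
    _ = _ := by
        rw [typeA, qPoch_two_mul_add_sub_one, diagWeight,
          mul_right_comm (qPoch q 1 (q * (u * u)) a)]
        generalize qPoch q 1 (q * (u * u * q ^ a)) (a + m - 1) = tail at tail_ne ⊢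
        field_simp
        ring

end PairFactors

section RowWeights

lemma map_qPoch {R S : Type*} [CommRing R] [CommRing S] (f : R →+* S) (q u v : R) (n : ℕ) :
    f (qPoch q u v n) = qPoch (f q) (f u) (f v) n := by
  simp [qPoch]

lemma natDegree_qPoch_C_mul_X_le {R : Type*} [CommRing R] (q c : R) (n : ℕ) :
    (qPoch (C q) 1 (C c * X) n).natDegree ≤ n := by
  refine (natDegree_prod_le _ _).trans ((sum_le_card_nsmul _ _ 1 fun k _ => ?_).trans (by simp))
  rw [← C_pow]
  compute_degree

variable {K ι : Type*} [Field K]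

/-- The genericity of the parameters that makes all the denominators of `M` and `M*` nonzero: the
nodes `x_r q^a` are distinct, and the product of two of them is `1` only for the square of some
`x_r`. -/
structure IsGeneric (q : K) (x : ι → K) : Prop where
  q_ne_zero : q ≠ 0
  ne_zero : ∀ r, x r ≠ 0
  node_injective : ∀ {r s a b}, x r * q ^ a = x s * q ^ b → r = s ∧ a = b
  mul_ne_one : ∀ r s k, r ≠ s ∨ k ≠ 0 → x r * x s * q ^ k ≠ 1

/-- The weight of the node `x_r q^y`: the factor of `M*(n; y) M(y; 0)` depending on `y_r` alone, up
to a constant. -/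
def rowWeight [Fintype ι] [DecidableEq ι] (q : K) (x : ι → K) (n : ι → ℕ) (r : ι) (y : ℕ) : K :=
  diagWeight q (x r) (n r) y * ∏ s ∈ univ.erase r, crossWeight q (x s) (n s) (x r * q ^ y)

/-- The functional `p ↦ ∑_y (rowWeight of x_r q^y) p(z + z⁻¹)`, where `z = x_r q^y` and
`0 ≤ y ≤ n_r`. -/
noncomputable def rowFunctional [Fintype ι] [DecidableEq ι] (q : K) (x : ι → K) (n : ι → ℕ)
    (r : ι) : K[X] →ₗ[K] K :=
  ∑ y ∈ range (n r + 1), rowWeight q x n r y • leval (addInv (x r * q ^ y))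

lemma rowFunctional_apply [Fintype ι] [DecidableEq ι] (q : K) (x : ι → K) (n : ι → ℕ) (r : ι)
    (p : K[X]) :
    rowFunctional q x n r p =
      ∑ y ∈ range (n r + 1), rowWeight q x n r y * p.eval (addInv (x r * q ^ y)) := by
  simp [rowFunctional, leval]

lemma rowFunctional_prod_mul_of_notMem [Fintype ι] [DecidableEq ι] (q : K) (x : ι → K)
    {S : Finset ι} {n : ι → ℕ} {r : ι} (hr : r ∉ S)
    (hn : n r = 0) (Q : K[X]) :
    rowFunctional q x n r ((∏ s ∈ Sᶜ, (X - C (addInv (x s)))) * Q) = 0 := by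
  rw [rowFunctional_apply, hn, zero_add, sum_range_one, pow_zero, mul_one, eval_mul, eval_prod,
    prod_eq_zero (mem_compl.2 hr) (by simp), zero_mul, mul_zero]

lemma crossWeight_zero_mul {q v z : K} (hz : z ≠ 0) (hv : v ≠ 0) (hne : z ≠ v) (hp : z * v ≠ 1) :
    crossWeight q v 0 z * (addInv z - addInv v) = -v⁻¹ := by
  have := sub_ne_zero.2 hne
  have := sub_ne_zero.2 hp.symm
  rw [← neg_sub (addInv v), addInv_sub_addInv hz hv]
  simp only [crossWeight, qPochTail, qPoch_zero, qPoch_succ, pow_zero, mul_one, one_mul]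
  field_simp

lemma crossWeight_of_ne_zero {q v z : K} {n : ℕ} (hn : n ≠ 0) (hp : z * v ≠ 1) :
    crossWeight q v n z = z * qPoch q 1 (q * (z * v)) (n - 1) / qPoch q z v (n + 1) := by
  obtain ⟨n, rfl⟩ := Nat.exists_eq_succ_of_ne_zero hn
  rw [crossWeight, Nat.succ_eq_add_one, qPochTail_succ hp, Nat.add_sub_cancel]

namespace IsGeneric

variable {q : K} {x : ι → K} (h : IsGeneric q x)
include h

lemma node_mul_ne_one {r s : ι} (hrs : r ≠ s) (a : ℕ) : x r * q ^ a * x s ≠ 1 := by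
  rw [mul_right_comm]
  exact h.mul_ne_one r s a (.inl hrs)

lemma node_ne_zero (r : ι) (a : ℕ) : x r * q ^ a ≠ 0 :=
  mul_ne_zero (h.ne_zero r) (pow_ne_zero a h.q_ne_zero)

variable [DecidableEq ι]

lemma sum_sigma_div_prod_sub_eq_zero {S : Finset ι} (hS : S.Nonempty) {n : ι → ℕ}
    (hn : ∀ s ∈ S, n s ≠ 0) {Q : K[X]} (hQ : Q ∈ degreeLT K #S) :
    ∑ p ∈ S.sigma fun r => range (n r + 1),
      (x p.1 * q ^ p.2) ^ (#S - 1) * Q.eval (addInv (x p.1 * q ^ p.2)) *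
          (∏ s ∈ S, qPoch q 1 (q * (x p.1 * q ^ p.2 * x s)) (n s - 1)) /
        ∏ p' ∈ (S.sigma fun r => range (n r + 1)).erase p,
          (x p.1 * q ^ p.2 - x p'.1 * q ^ p'.2) = 0 := by
  have card_pos := hS.card_pos
  have natDegree_le : Q.natDegree ≤ #S - 1 := by
    rw [natDegree_le_iff_coeff_eq_zero]
    exact fun k hk => (degree_lt_iff_coeff_zero _ _).1 (mem_degreeLT.1 hQ) k (by omega)
  obtain ⟨P, hPdeg, hP⟩ := exists_eval_eq_pow_mul_eval_add_inv natDegree_le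
  have eval_eq (r : ι) (a : ℕ) :
      (P * ∏ s ∈ S, qPoch (C q) 1 (C (q * x s) * X) (n s - 1)).eval (x r * q ^ a) =
        (x r * q ^ a) ^ (#S - 1) * Q.eval (addInv (x r * q ^ a)) *
          ∏ s ∈ S, qPoch q 1 (q * (x r * q ^ a * x s)) (n s - 1) := by
    rw [eval_mul, hP _ (h.node_ne_zero r a), eval_prod, addInv]
    congr 1
    refine prod_congr rfl fun s _ => ?_
    rw [← coe_evalRingHom, map_qPoch]
    simp [mul_assoc, mul_comm (x s)]
  simp only [← eval_eq]
  refine sum_eval_div_prod_sub_eq_zero (v := fun p : (_ : ι) × ℕ => x p.1 * q ^ p.2) ?_ ?_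
  · rintro ⟨r, a⟩ - ⟨s, b⟩ - hrs
    obtain ⟨rfl, rfl⟩ := h.node_injective hrs
    rfl
  · have prod_degree : (∏ s ∈ S, qPoch (C q) 1 (C (q * x s) * X) (n s - 1)).natDegree ≤
        ∑ s ∈ S, (n s - 1) :=
      (natDegree_prod_le _ _).trans (sum_le_sum fun s _ => natDegree_qPoch_C_mul_X_le _ _ _)
    have card_eq : ∑ s ∈ S, (n s + 1) = ∑ s ∈ S, (n s - 1) + 2 * #S := by
      rw [mul_comm, ← smul_eq_mul, ← sum_const, ← sum_add_distrib]
      exact sum_congr rfl fun s hs => by have := hn s hs; omega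
    have degree_le := natDegree_mul_le_of_le hPdeg prod_degree
    simp only [card_sigma, card_range]
    omega

variable [Fintype ι]

lemma rowWeight_mul_prod_addInv_sub {S : Finset ι} {n : ι → ℕ} (hn : ∀ s, s ∈ S ↔ n s ≠ 0)
    {r : ι} (hr : r ∈ S) (a : ℕ) :
    rowWeight q x n r a * ∏ s ∈ Sᶜ, (addInv (x r * q ^ a) - addInv (x s)) =
      (∏ s ∈ Sᶜ, -(x s)⁻¹) *
        ((x r * q ^ a) ^ (#S - 1) * (∏ s ∈ S, qPoch q 1 (q * (x r * q ^ a * x s)) (n s - 1)) /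
          ∏ p ∈ (S.sigma fun s => range (n s + 1)).erase ⟨r, a⟩,
            (x r * q ^ a - x p.1 * q ^ p.2)) := by
  have erase_sdiff : univ.erase r \ S = Sᶜ := by
    rw [erase_sdiff_comm, erase_eq_of_notMem (by simp [hr]), compl_eq_univ_sdiff]
  have erase_inter : univ.erase r ∩ S = S.erase r := by rw [Finset.erase_inter, univ_inter]
  have compl_factor : (∏ s ∈ Sᶜ, crossWeight q (x s) (n s) (x r * q ^ a)) *
      ∏ s ∈ Sᶜ, (addInv (x r * q ^ a) - addInv (x s)) = ∏ s ∈ Sᶜ, -(x s)⁻¹ := by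
    rw [← prod_mul_distrib]
    refine prod_congr rfl fun s hs => ?_
    have hrs : r ≠ s := fun e => mem_compl.1 hs (e ▸ hr)
    rw [not_not.1 (mt (hn s).2 (mem_compl.1 hs))]
    refine crossWeight_zero_mul (h.node_ne_zero r a) (h.ne_zero s) (fun e => hrs ?_)
      (h.node_mul_ne_one hrs a)
    exact (h.node_injective (b := 0) (by simpa using e)).1
  have support_factor : ∏ s ∈ S.erase r, crossWeight q (x s) (n s) (x r * q ^ a) =
      (x r * q ^ a) ^ (#S - 1) *
          (∏ s ∈ S.erase r, qPoch q 1 (q * (x r * q ^ a * x s)) (n s - 1)) /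
        ∏ s ∈ S.erase r, qPoch q (x r * q ^ a) (x s) (n s + 1) := by
    rw [← card_erase_of_mem hr, ← prod_const, ← prod_mul_distrib, ← prod_div_distrib]
    refine prod_congr rfl fun s hs => crossWeight_of_ne_zero ((hn s).1 (mem_of_mem_erase hs))
      (h.node_mul_ne_one (ne_of_mem_erase hs).symm a)
  rw [rowWeight, ← prod_inter_mul_prod_sdiff _ S, erase_sdiff, erase_inter, support_factor,
    ← compl_factor, prod_erase_sigma _ hr, ← mul_prod_erase S _ hr, diagWeight,
    mul_right_comm (x r) (q ^ a) (x r)]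
  simp only [qPoch, div_eq_mul_inv, mul_inv]
  ring

lemma sum_rowFunctional_prod_mul_eq_zero {S : Finset ι} (hS : S.Nonempty) {n : ι → ℕ}
    (hn : ∀ s, s ∈ S ↔ n s ≠ 0) {Q : K[X]} (hQ : Q ∈ degreeLT K #S) :
    ∑ r ∈ S, rowFunctional q x n r ((∏ s ∈ Sᶜ, (X - C (addInv (x s)))) * Q) = 0 := by
  have vanishing := h.sum_sigma_div_prod_sub_eq_zero hS (fun s => (hn s).1) hQ
  rw [sum_sigma] at vanishing
  rw [← mul_zero (∏ s ∈ Sᶜ, -(x s)⁻¹), ← vanishing, mul_sum]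
  refine sum_congr rfl fun r hr => ?_
  rw [rowFunctional_apply, mul_sum]
  refine sum_congr rfl fun a _ => ?_
  simp only [eval_mul, eval_prod, eval_sub, eval_X, eval_C]
  rw [← mul_assoc, h.rowWeight_mul_prod_addInv_sub hn hr]
  ring

end IsGeneric

theorem IsGeneric.sum_prod_rowWeight_mul_vandermonde {ℓ : ℕ} {q : K} {x : Fin ℓ → K}
    (h : IsGeneric q x) {n : Fin ℓ → ℕ} (hn : n ≠ 0) :
    ∑ y ∈ Icc 0 n, (∏ r, rowWeight q x n r (y r)) *
      ∏ r, ∏ s ∈ Ioi r, (addInv (x s * q ^ y s) - addInv (x r * q ^ y r)) = 0 := by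
  rw [sum_Icc_prod_mul_vandermonde n _ fun r a => addInv (x r * q ^ a)]
  let S : Finset (Fin ℓ) := {r | n r ≠ 0}
  have hS : S.Nonempty := by
    obtain ⟨r, hr⟩ := Function.ne_iff.1 hn
    exact ⟨r, by simpa [S] using hr⟩
  convert det_linearFunctional_X_pow_eq_zero (rowFunctional q x n) hS
    (D := ∏ s ∈ Sᶜ, (X - C (addInv (x s)))) (prod_ne_zero_iff.2 fun s _ => X_sub_C_ne_zero _) ?_
    (fun r hr Q => ?_) (fun Q hQ => h.sum_rowFunctional_prod_mul_eq_zero hS (by simp [S]) hQ)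
    using 4
  · simp [rowFunctional_apply]
  · rw [natDegree_finsetProd_X_sub_C_eq_card, card_compl_add_card, Fintype.card_fin]
  · exact rowFunctional_prod_mul_of_notMem q x hr (by simpa [S] using hr) Q

end RowWeights

section BaileyMatrices

variable {ℓ : ℕ} {q : ℂ} {x : Fin ℓ → ℂ}

lemma qp_natCast (a q : ℂ) (n : ℕ) : qp a q n = qPoch q 1 a n := by
  simp [qp, qPoch]

lemma mul_pow_ne_one_of_qp_ne_zero {a q : ℂ} {n : ℕ} (h : qp a q (n + 1 : ℕ) ≠ 0) :
    a * q ^ n ≠ 1 := by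
  rw [qp_natCast, qPoch_succ] at h
  exact (sub_ne_zero.1 (right_ne_zero_of_mul h)).symm

lemma IsGeneric.pow_ne_one {K ι : Type*} [Field K] [Nonempty ι] {q : K} {x : ι → K}
    (h : IsGeneric q x) (k : ℕ) : q ^ (k + 1) ≠ 1 := fun hk => by
  obtain ⟨r⟩ := ‹Nonempty ι›
  exact k.succ_ne_zero (h.node_injective (r := r) (s := r) (b := 0) (by simp [hk])).2

lemma IsGeneric.shift {K ι : Type*} [Field K] {q : K} {x : ι → K} (h : IsGeneric q x)
    (j : ι → ℕ) : IsGeneric q fun r => x r * q ^ j r where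
  q_ne_zero := h.q_ne_zero
  ne_zero r := h.node_ne_zero r (j r)
  node_injective := fun {r s a b} e => by
    obtain ⟨rfl, hab⟩ := h.node_injective (r := r) (s := s) (a := j r + a) (b := j s + b)
      (by simpa only [pow_add, mul_assoc] using e)
    exact ⟨rfl, by omega⟩
  mul_ne_one r s k hrs e := h.mul_ne_one r s (j r + j s + k) (hrs.imp_right (by omega))
    (by rw [← e]; ring)

lemma MC_add_left (hq : q ≠ 0) (j n y : Fin ℓ → ℕ) :
    MC ℓ q x (j + n) (j + y) = MC ℓ q (fun r => x r * q ^ j r) n y := by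
  simp only [MC, Pi.add_apply, Nat.cast_add, add_sub_add_left_eq_sub, zpow_add₀ hq, zpow_sub₀ hq,
    zpow_natCast]
  refine prod_congr rfl fun r _ => prod_congr rfl fun s _ => ?_
  congr 3 <;> ring

lemma MCstar_add_left (hq : q ≠ 0) (j n y : Fin ℓ → ℕ) :
    MCstar ℓ q x (j + n) (j + y) = MCstar ℓ q (fun r => x r * q ^ j r) n y := by
  simp only [MCstar, Pi.add_apply, Nat.cast_add, sum_add_distrib, add_sub_add_left_eq_sub,
    zpow_add₀ hq, zpow_sub₀ hq, zpow_natCast]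
  congr 3
  · refine prod_congr rfl fun r _ => prod_congr rfl fun s _ => ?_
    congr 3 <;> ring
  · refine prod_congr rfl fun r _ => prod_congr rfl fun s _ => ?_
    congr 2 <;> ring

lemma MC_self (n : Fin ℓ → ℕ) : MC ℓ q x n n = 1 := by
  simp [MC, qp]

lemma IsGeneric.MCstar_self (h : IsGeneric q x) (n : Fin ℓ → ℕ) : MCstar ℓ q x n n = 1 := by
  have ratio_eq (r s : Fin ℓ) : (if r < s then
      (1 - x r * x s * q ^ ((n r : ℤ) + n s)) / (1 - x r * x s * q ^ ((n r : ℤ) + n s))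
      else 1) = 1 := by
    split_ifs with hrs
    · refine div_self (sub_ne_zero.2 (Ne.symm ?_))
      exact_mod_cast h.mul_ne_one r s (n r + n s) (.inl hrs.ne)
    · rfl
  simp [MCstar, qp, ratio_eq]

lemma MCstar_mul_MC_zero (hq : q ≠ 0) {n y : Fin ℓ → ℕ} (hy : y ≤ n) :
    MCstar ℓ q x n y * MC ℓ q x y 0 =
      (∏ r, ∏ s, pairFactor q (x r) (x s) (y r) (y s) (n r) (n s)) *
        (∏ r, ∏ s ∈ Ioi r, (1 - x r * x s * q ^ (y r + y s)) / (1 - x r * x s * q ^ (n r + n s))) *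
        ((-1) ^ (∑ r, (n r - y r)) * q ^ (∑ r, (n r - y r)).choose 2) := by
  have cast_sub (r : Fin ℓ) : (n r : ℤ) - y r = (n r - y r : ℕ) := (Nat.cast_sub (hy r)).symm
  have cast_sum_sub : (∑ r, (n r : ℤ)) - ∑ r, (y r : ℤ) = (∑ r, (n r - y r) : ℕ) := by
    rw [← sum_sub_distrib, Nat.cast_sum]
    exact sum_congr rfl fun r _ => cast_sub r
  have cast_choose (d : ℕ) : (d : ℤ) * (d - 1) / 2 = d.choose 2 := by
    rw [Nat.choose_two_right]
    cases d with
    | zero => simp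
    | succ d => push_cast; simp
  have pair_eq (r s : Fin ℓ) :
      (qp (q * (x r / x s) * q ^ ((y r : ℤ) - y s)) q ((n r : ℤ) - y r))⁻¹ *
            (qp (x r * x s * q ^ ((y r : ℤ) + n s)) q ((n r : ℤ) - y r))⁻¹ *
          ((qp (q * (x r / x s) * q ^ ((0 : ℤ) - 0)) q ((y r : ℤ) - 0))⁻¹ *
            (qp (q * (x r * x s) * q ^ ((0 : ℤ) + 0)) q ((y r : ℤ) - 0))⁻¹) =
        pairFactor q (x r) (x s) (y r) (y s) (n r) (n s) := by
    have ratio_eq : q * (x r / x s) * q ^ ((y r : ℤ) - y s) =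
        q * (x r * q ^ y r / (x s * q ^ y s)) := by
      rw [zpow_sub₀ hq, zpow_natCast, zpow_natCast, mul_assoc, div_mul_div_comm]
    simp only [ratio_eq, cast_sub, sub_zero, add_zero, zpow_zero, mul_one, qp_natCast,
      ← Nat.cast_add, zpow_natCast, pairFactor, mul_inv]
  simp only [MCstar, MC, Pi.zero_apply, Nat.cast_zero, ← pair_eq, prod_mul_distrib,
    ← filter_lt_eq_Ioi, prod_filter, cast_sum_sub, cast_choose, ← Nat.cast_add, zpow_natCast]
  ring

theorem IsGeneric.exists_MCstar_mul_MC_zero_eq (h : IsGeneric q x) (n : Fin ℓ → ℕ) :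
    ∃ c, ∀ y ≤ n, MCstar ℓ q x n y * MC ℓ q x y 0 =
      c * ((∏ r, rowWeight q x n r (y r)) *
        ∏ r, ∏ s ∈ Ioi r, (addInv (x s * q ^ y s) - addInv (x r * q ^ y r))) := by
  refine ⟨(∏ r, (-1) ^ n r * x r ^ n r * q ^ (n r).choose 2 /
      qPoch q 1 (q * (x r * x r)) (2 * n r - 1)) *
    ∏ r, ∏ s ∈ Ioi r, (x s - x r) * x r ^ n s * x s ^ n r * q ^ (n r * n s) /
      qPochTail q (x r * x s) (n r + n s) ^ 2 / (1 - x r * x s * q ^ (n r + n s)), fun y hy => ?_⟩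
  have diag (r : Fin ℓ) := pairFactor_self h.q_ne_zero
    (haveI : Nonempty (Fin ℓ) := ⟨r⟩; h.pow_ne_one) (h.ne_zero r)
    (fun k => h.mul_ne_one r r (k + 1) (.inr k.succ_ne_zero)) (hy r)
  have offDiag (r : Fin ℓ) : ∀ s ∈ Ioi r, _ = _ := fun s hs =>
    have hrs : r ≠ s := (mem_Ioi.1 hs).ne
    pairFactor_mul_pairFactor h.q_ne_zero (h.ne_zero r) (h.ne_zero s)
      (fun a b e => hrs (h.node_injective e).1) (fun k => h.mul_ne_one r s k (.inl hrs))
      (hy r) (hy s)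
  have diag_prod := prod_congr rfl fun r (_ : r ∈ univ) => diag r
  have offDiag_prod := prod_congr rfl fun r (_ : r ∈ univ) => prod_congr rfl (offDiag r)
  have rowWeight_prod : ∏ r, rowWeight q x n r (y r) = (∏ r, diagWeight q (x r) (n r) (y r)) *
      ∏ r, ∏ s ∈ Ioi r, crossWeight q (x s) (n s) (x r * q ^ y r) *
        crossWeight q (x r) (n r) (x s * q ^ y s) := by
    rw [prod_prod_Ioi_mul_eq_prod_prod_off_diag fun s r =>
      crossWeight q (x s) (n s) (x r * q ^ y r), ← prod_mul_distrib]
    simp only [rowWeight, compl_singleton]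
  rw [MCstar_mul_MC_zero h.q_ne_zero hy, prod_prod_eq_prod_diag_mul_prod_Ioi, pow_choose_sum_two,
    ← prod_pow_eq_pow_sum, rowWeight_prod]
  simp only [prod_mul_distrib] at diag_prod offDiag_prod ⊢
  linear_combination congr($diag_prod * $offDiag_prod)

lemma IsGeneric.sum_MCstar_mul_MC_eq_zero (h : IsGeneric q x) {j n : Fin ℓ → ℕ} (hjn : j < n) :
    ∑ y ∈ Icc j n, MCstar ℓ q x n y * MC ℓ q x y j = 0 := by
  obtain ⟨n, rfl⟩ := exists_add_of_le hjn.le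
  have hn : n ≠ 0 := by rintro rfl; simp at hjn
  obtain ⟨c, hc⟩ := (h.shift j).exists_MCstar_mul_MC_zero_eq n
  have image_eq : Icc j (j + n) = (Icc 0 n).map (addLeftEmbedding j) := by
    rw [map_add_left_Icc, add_zero]
  rw [image_eq, sum_map, ← mul_zero c, ← (h.shift j).sum_prod_rowWeight_mul_vandermonde hn, mul_sum]
  refine sum_congr rfl fun y hy => ?_
  rw [← hc y (mem_Icc.1 hy).2, addLeftEmbedding_apply, MCstar_add_left h.q_ne_zero,
    ← MC_add_left h.q_ne_zero, add_zero]

lemma eq_and_eq_of_mul_pow_eq_mul_pow {ι M : Type*} [Monoid M] {q : M} {x : ι → M}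
    (hne : ∀ (j : ι → ℕ) (r s : ι) (k : ℕ), x r * q ^ (j r + (k + 1)) ≠ x s * q ^ j s)
    {r s : ι} {a b : ℕ} (e : x r * q ^ a = x s * q ^ b) : r = s ∧ a = b := by
  classical
  have hrs : r = s := by
    by_contra hrs
    refine hne (Pi.single s (b + 1)) r s a ?_
    simp only [Pi.single_eq_of_ne hrs, Pi.single_eq_same, zero_add, pow_succ, ← mul_assoc, e]
  subst hrs
  have le {a b : ℕ} (e : x r * q ^ a = x r * q ^ b) : b ≤ a := not_lt.1 fun hab => by
    obtain ⟨k, rfl⟩ := Nat.exists_eq_add_of_lt hab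
    exact hne (fun _ => a) r r k e.symm
  exact ⟨rfl, le_antisymm (le e.symm) (le e)⟩

lemma mul_pow_ne_mul_pow_of_qp_ne_zero (hq : q ≠ 0) (hx : ∀ k, x k ≠ 0)
    (hd1 : ∀ i j : Fin ℓ → ℕ, (∀ k, j k ≤ i k) → ∀ r s : Fin ℓ,
      qp (q * (x r / x s) * q ^ ((j r : ℤ) - (j s : ℤ))) q ((i r : ℤ) - (j r : ℤ)) ≠ 0)
    (j : Fin ℓ → ℕ) (r s : Fin ℓ) (k : ℕ) : x r * q ^ (j r + (k + 1)) ≠ x s * q ^ j s := by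
  intro e
  have hd := hd1 (fun t => j t + (k + 1)) j (fun t => Nat.le_add_right _ _) r s
  rw [Nat.cast_add, add_sub_cancel_left] at hd
  refine mul_pow_ne_one_of_qp_ne_zero hd ?_
  have := hx s
  rw [zpow_sub₀ hq, zpow_natCast, zpow_natCast]
  field_simp
  linear_combination e

lemma mul_mul_pow_ne_one_of_qp_ne_zero
    (hd2 : ∀ i j : Fin ℓ → ℕ, (∀ k, j k ≤ i k) → ∀ r s : Fin ℓ,
      qp (q * (x r * x s) * q ^ ((j r : ℤ) + (j s : ℤ))) q ((i r : ℤ) - (j r : ℤ)) ≠ 0)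
    (hd4 : ∀ (i : Fin ℓ → ℕ) (r s : Fin ℓ), r < s →
      (1 : ℂ) - x r * x s * q ^ ((i r : ℤ) + (i s : ℤ)) ≠ 0)
    (r s : Fin ℓ) (k : ℕ) (hk : r ≠ s ∨ k ≠ 0) : x r * x s * q ^ k ≠ 1 := by
  have of_lt {r s : Fin ℓ} (hrs : r < s) : x r * x s * q ^ k ≠ 1 := fun e =>
    hd4 (Pi.single r k) r s hrs (by simp [Pi.single_eq_of_ne hrs.ne', e])
  rcases lt_trichotomy r s with hrs | rfl | hrs
  · exact of_lt hrs
  · obtain ⟨k, rfl⟩ := Nat.exists_eq_succ_of_ne_zero (hk.resolve_left (· rfl))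
    have hd := hd2 (fun _ => k + 1) 0 (fun _ => Nat.zero_le _) r r
    refine fun e => mul_pow_ne_one_of_qp_ne_zero (a := q * (x r * x r)) (by simpa using hd) ?_
    rw [← e, pow_succ]
    ring
  · rw [mul_comm (x r)]
    exact of_lt hrs

lemma isGeneric_of_qp_ne_zero (hq : q ≠ 0) (hx : ∀ k, x k ≠ 0)
    (hd1 : ∀ i j : Fin ℓ → ℕ, (∀ k, j k ≤ i k) → ∀ r s : Fin ℓ,
      qp (q * (x r / x s) * q ^ ((j r : ℤ) - (j s : ℤ))) q ((i r : ℤ) - (j r : ℤ)) ≠ 0)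
    (hd2 : ∀ i j : Fin ℓ → ℕ, (∀ k, j k ≤ i k) → ∀ r s : Fin ℓ,
      qp (q * (x r * x s) * q ^ ((j r : ℤ) + (j s : ℤ))) q ((i r : ℤ) - (j r : ℤ)) ≠ 0)
    (hd4 : ∀ (i : Fin ℓ → ℕ) (r s : Fin ℓ), r < s →
      (1 : ℂ) - x r * x s * q ^ ((i r : ℤ) + (i s : ℤ)) ≠ 0) : IsGeneric q x where
  q_ne_zero := hq
  ne_zero := hx
  node_injective := eq_and_eq_of_mul_pow_eq_mul_pow (mul_pow_ne_mul_pow_of_qp_ne_zero hq hx hd1)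
  mul_ne_one := mul_mul_pow_ne_one_of_qp_ne_zero hd2 hd4

end BaileyMatrices

/-- **C_ℓ Bailey Pair Inversion.**
`B_N = ∑_{0 ≤ y ≤ N} M(N;y) A_y` for all `N` iff
`A_N = ∑_{0 ≤ y ≤ N} M*(N;y) B_y` for all `N`. -/
theorem Cl_bailey_pair_inversion (ℓ : ℕ) (hℓ : 1 ≤ ℓ) (q : ℂ)
    (hq : q ≠ 0) (x : Fin ℓ → ℂ) (hx : ∀ k, x k ≠ 0)
    (hd1 : ∀ i j : Fin ℓ → ℕ, (∀ k, j k ≤ i k) → ∀ r s : Fin ℓ,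
      qp (q * (x r / x s) * q ^ ((j r : ℤ) - (j s : ℤ))) q ((i r : ℤ) - (j r : ℤ)) ≠ 0)
    (hd2 : ∀ i j : Fin ℓ → ℕ, (∀ k, j k ≤ i k) → ∀ r s : Fin ℓ,
      qp (q * (x r * x s) * q ^ ((j r : ℤ) + (j s : ℤ))) q ((i r : ℤ) - (j r : ℤ)) ≠ 0)
    (hd3 : ∀ i j : Fin ℓ → ℕ, (∀ k, j k ≤ i k) → ∀ r s : Fin ℓ,
      qp ((x r * x s) * q ^ ((j r : ℤ) + (i s : ℤ))) q ((i r : ℤ) - (j r : ℤ)) ≠ 0)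
    (hd4 : ∀ (i : Fin ℓ → ℕ) (r s : Fin ℓ), r < s →
      (1 : ℂ) - x r * x s * q ^ ((i r : ℤ) + (i s : ℤ)) ≠ 0)
    (A B : (Fin ℓ → ℕ) → ℂ) :
    (∀ N : Fin ℓ → ℕ, B N = ∑ y ∈ Finset.Icc 0 N, MC ℓ q x N y * A y) ↔
      (∀ N : Fin ℓ → ℕ, A N = ∑ y ∈ Finset.Icc 0 N, MCstar ℓ q x N y * B y) := by
  have generic := isGeneric_of_qp_ne_zero hq hx hd1 hd2 hd4
  simp only [← bot_eq_zero]
  exact sum_Icc_bot_inversion MC_self generic.MCstar_self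
    (fun j N => generic.sum_MCstar_mul_MC_eq_zero) A B
end
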